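/- Let k ≥ 3, n sufficiently large relative to k (n > Ck for an absolute constant C suffices). Among all intersecting families F ⊆ C([n],k) with covering number τ(F) ≥ 3, the maximum size is |C_3(n,k)|, where C_3(n,k) is the maximal intersecting family whose sets avoiding element 1 form a copy of T_2(k) = {[k], {1}∪[k+1,2k-1], {2}∪[k+1,2k-1]} (on the ground set [2,n]). -/

import Mathlib

open Finset

/-- `S` is a hitting set (cover) for the family `F`. -/
def covers (S : Finset ℕ) (F : Finset (Finset ℕ)) : Prop := ∀ A ∈ F, (S ∩ A).Nonempty

/-- The copy of `T_2(k)` on the ground set `[2,n]`: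
`{[2,k+1], {2} ∪ [k+2,2k], {3} ∪ [k+2,2k]}`. -/
def T2fam (k : ℕ) : Finset (Finset ℕ) :=
  {Finset.Icc 2 (k + 1), insert 2 (Finset.Icc (k + 2) (2 * k)),
    insert 3 (Finset.Icc (k + 2) (2 * k))}

/-- The family `C_3(n,k)`: the copy of `T_2(k)` on `[2,n]` together with all `k`-subsets of
`[n]` containing `1` that meet all three of its members. -/
def C3fam (n k : ℕ) : Finset (Finset ℕ) :=
  T2fam k ∪
    ((Finset.Icc 1 n).powersetCard k).filter
      (fun A => 1 ∈ A ∧ ∀ B ∈ T2fam k, (A ∩ B).Nonempty)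

/-- `r`-subsets of `V` missing some member of `G`. -/
def missF (V : Finset ℕ) (r : ℕ) (G : Finset (Finset ℕ)) : Finset (Finset ℕ) :=
  (V.powersetCard r).filter (fun A => ∃ B ∈ G, Disjoint A B)

lemma count_lb (V S W : Finset ℕ) (r r' p : ℕ) (hS : S ⊆ V) (hd : Disjoint S W)
    (hr : S.card + r' = r) (hp : p + S.card + W.card ≤ V.card) :
    p.choose r' ≤ ((V.powersetCard r).filter (fun A => S ⊆ A ∧ Disjoint A W)).card := by
  have h1 : p ≤ (V \ (S ∪ W)).card := by
    have := le_card_sdiff (S ∪ W) V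
    have := card_union_le S W
    omega
  calc p.choose r' ≤ (V \ (S ∪ W)).card.choose r' := Nat.choose_le_choose _ h1
    _ = ((V \ (S ∪ W)).powersetCard r').card := by rw [card_powersetCard]
    _ ≤ _ := by
      apply card_le_card_of_injOn (fun R => S ∪ R)
      · intro R hR
        simp only [mem_coe, mem_powersetCard] at hR
        have hRS : Disjoint S R := by
          rw [disjoint_left]; intro x hx hxR
          have := hR.1 hxR; simp at this; tauto
        simp only [coe_filter, Set.mem_ofPred_eq, mem_powersetCard]
        refine ⟨⟨union_subset hS (hR.1.trans sdiff_subset), ?_⟩, subset_union_left, ?_⟩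
        · rw [card_union_of_disjoint hRS]; omega
        · rw [disjoint_union_left]; refine ⟨hd, ?_⟩
          rw [disjoint_left]; intro x hx hxR
          have := hR.1 hx; simp at this; tauto
      · intro R hR R' hR' h
        simp only [mem_coe, mem_powersetCard] at hR hR'
        simp only at h
        have key : ∀ R : Finset ℕ, R ⊆ V \ (S ∪ W) → (S ∪ R) \ S = R := by
          intro R hR
          ext x; constructor
          · simp; tauto
          · intro hx; have := hR hx; simp at this ⊢; tauto
        rw [← key R hR.1, ← key R' hR'.1, h]

lemma count_miss (V B : Finset ℕ) (r : ℕ) :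
    (V.powersetCard r).filter (fun A => Disjoint A B) = (V \ B).powersetCard r := by
  ext A; simp only [mem_filter, mem_powersetCard, subset_sdiff]; tauto

lemma lossI (V : Finset ℕ) (G : Finset (Finset ℕ)) (k r p : ℕ) (hG : ∀ B ∈ G, B.card = k)
    (hp : p + 1 + k = V.card) (I : Finset ℕ) (hIV : I ⊆ V) (hI : ∀ y ∈ I, ∃ B ∈ G, y ∉ B)
    (hc : I.card ≤ p + 1) :
    ∑ i ∈ range I.card, (p - i).choose r ≤
      ((V.powersetCard (r + 1)).filter
        (fun A => ¬ Disjoint A I ∧ ∃ B ∈ G, Disjoint A B)).card := by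
  classical
  induction I using Finset.induction_on with
  | empty => simp
  | insert y I hy ih =>
    rw [card_insert_of_notMem hy] at hc ⊢
    rw [sum_range_succ]
    have ih' := ih (fun z hz => hIV (mem_insert_of_mem hz))
      (fun z hz => hI z (mem_insert_of_mem hz)) (by omega)
    obtain ⟨B, hB, hyB⟩ := hI y (mem_insert_self _ _)
    have h2 := count_lb V {y} (I ∪ B) (r + 1) r (p - I.card)
      (by simpa using hIV (mem_insert_self _ _)) (by simp [hy, hyB])
      (by simp; omega) (by
        have := card_union_le I B
        have := hG B hB
        simp; omega)
    refine (Nat.add_le_add ih' h2).trans ?_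
    rw [← card_union_of_disjoint]
    · apply card_le_card
      intro A hA
      simp only [mem_union, mem_filter, singleton_subset_iff, disjoint_union_right] at hA ⊢
      rcases hA with ⟨h1, h2, h3⟩ | ⟨h1, h2, h3, h4⟩
      · exact ⟨h1, fun h => h2 (h.mono_right (subset_insert _ _)), h3⟩
      · refine ⟨h1, fun h => ?_, B, hB, h4⟩
        exact (disjoint_left.1 h h2) (mem_insert_self _ _)
    · rw [disjoint_left]
      intro A hA hA'
      simp only [mem_filter, disjoint_union_right] at hA hA'
      exact hA.2.1 hA'.2.2.1

lemma arithA (q j i : ℕ) (hi : i ≤ j + 1) :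
    (q + i).choose (j + 2) + (q + j + 1).choose (j + 1) ≤
      q.choose (j + 2) + ∑ l ∈ range (i + 1), (q + j + 1 - l).choose (j + 1) := by
  rw [sum_range_succ']
  have e1 : (q + i).choose (j + 2) = q.choose (j + 2) + ∑ l ∈ range i, (q + l).choose (j + 1) := by
    clear hi
    induction i with
    | zero => simp
    | succ i ih => rw [sum_range_succ, ← add_assoc q i 1, Nat.choose_succ_succ' (q + i) (j + 1), ih]; ring
  have e2 : ∑ l ∈ range i, (q + l).choose (j + 1) ≤
      ∑ l ∈ range i, (q + j + 1 - (l + 1)).choose (j + 1) := by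
    rw [← sum_range_reflect]
    apply sum_le_sum
    intro l hl
    rw [mem_range] at hl
    apply Nat.choose_le_choose; omega
  rw [e1]; simp only [Nat.sub_zero]; omega

lemma arithA' (q j i : ℕ) (hi : i ≤ j) (hi1 : 1 ≤ i) :
    (q + i).choose (j + 2) + (q + j + 1).choose (j + 1) + q.choose j ≤
      q.choose (j + 2) + ∑ l ∈ range (i + 1), (q + j + 1 - l).choose (j + 1) := by
  rw [sum_range_succ']
  have e1 : (q + i).choose (j + 2) = q.choose (j + 2) + ∑ l ∈ range i, (q + l).choose (j + 1) := by
    clear hi hi1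
    induction i with
    | zero => simp
    | succ i ih => rw [sum_range_succ, ← add_assoc q i 1, Nat.choose_succ_succ' (q + i) (j + 1), ih]; ring
  have e2 : ∑ l ∈ range i, (q + 1 + l).choose (j + 1) ≤
      ∑ l ∈ range i, (q + j + 1 - (l + 1)).choose (j + 1) := by
    rw [← sum_range_reflect]
    apply sum_le_sum
    intro l hl
    rw [mem_range] at hl
    apply Nat.choose_le_choose; omega
  have e3 : ∑ l ∈ range i, (q + l).choose (j + 1) + q.choose j
      ≤ ∑ l ∈ range i, (q + 1 + l).choose (j + 1) := by
    obtain ⟨i, rfl⟩ : ∃ i', i = i' + 1 := ⟨i - 1, by omega⟩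
    rw [sum_range_succ', sum_range_succ']
    have h4 : ∑ l ∈ range i, (q + (l + 1)).choose (j + 1)
      ≤ ∑ l ∈ range i, (q + 1 + (l + 1)).choose (j + 1) :=
      sum_le_sum (fun l _ => Nat.choose_le_choose _ (by omega))
    have := Nat.choose_succ_succ' q j
    simp only [add_zero]; omega
  rw [e1]; simp only [Nat.sub_zero]; omega

/-- Two members: exact count of sets missing one of them. -/
lemma card_two (V B1 B2 : Finset ℕ) (r k i M : ℕ) (h1 : B1 ⊆ V) (h2 : B2 ⊆ V)
    (c1 : B1.card = k) (c2 : B2.card = k) (hi : (B1 ∩ B2).card = i)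
    (hM : M + 2 * k = V.card + i) :
    2 * (V.card - k).choose r ≤
      ((V.powersetCard r).filter (fun A => Disjoint A B1 ∨ Disjoint A B2)).card + M.choose r := by
  rw [filter_or, count_miss, count_miss]
  have h := card_union_add_card_inter ((V \ B1).powersetCard r) ((V \ B2).powersetCard r)
  have e : (V \ B1).powersetCard r ∩ (V \ B2).powersetCard r = (V \ (B1 ∪ B2)).powersetCard r := by
    ext A; simp only [mem_inter, mem_powersetCard, subset_sdiff, disjoint_union_right]; tauto
  have u := card_union_add_card_inter B1 B2
  rw [e, card_powersetCard, card_powersetCard, card_powersetCard, card_sdiff_of_subset h1,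
    card_sdiff_of_subset h2, card_sdiff_of_subset (union_subset h1 h2), c1, c2] at h
  have : V.card - (B1 ∪ B2).card = M := by omega
  rw [this] at h
  omega

/-- Combine a pair with extra sets hitting the intersection of the pair. -/
lemma pair_loss (V : Finset ℕ) (G : Finset (Finset ℕ)) (q j i : ℕ)
    (hV : V.card = q + 2 * j + 5) (hGV : ∀ B ∈ G, B ⊆ V) (hG : ∀ B ∈ G, B.card = j + 3)
    (B1 B2 : Finset ℕ) (h1 : B1 ∈ G) (h2 : B2 ∈ G) (hi : (B1 ∩ B2).card = i + 1)
    (X : Finset (Finset ℕ)) (hX : ∀ A ∈ X, A ∈ missF V (j + 2) G ∧ ¬ Disjoint A B1 ∧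
      ¬ Disjoint A B2) :
    2 * (q + j + 2).choose (j + 2) + X.card ≤ (missF V (j + 2) G).card + (q + i).choose (j + 2) := by
  have h := card_two V B1 B2 (j + 2) (j + 3) (i + 1) (q + i) (hGV _ h1) (hGV _ h2) (hG _ h1)
    (hG _ h2) hi (by omega)
  rw [show V.card - (j + 3) = q + j + 2 by omega] at h
  have h3 : ((V.powersetCard (j + 2)).filter (fun A => Disjoint A B1 ∨ Disjoint A B2)).card + X.card
      ≤ (missF V (j + 2) G).card := by
    rw [← card_union_of_disjoint]
    · apply card_le_card
      intro A hA
      rcases mem_union.1 hA with hA | hA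
      · rw [mem_filter] at hA
        rw [missF, mem_filter]
        refine ⟨hA.1, ?_⟩
        rcases hA.2 with h | h
        · exact ⟨_, h1, h⟩
        · exact ⟨_, h2, h⟩
      · exact (hX A hA).1
    · rw [disjoint_left]; intro A hA hA'
      have := hX A hA'
      rw [mem_filter] at hA
      tauto
  omega

lemma pair_loss_I (V : Finset ℕ) (G : Finset (Finset ℕ)) (q j i : ℕ)
    (hV : V.card = q + 2 * j + 5) (hGV : ∀ B ∈ G, B ⊆ V) (hG : ∀ B ∈ G, B.card = j + 3)
    (hne : ∀ y ∈ V, ∃ B ∈ G, y ∉ B)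
    (B1 B2 : Finset ℕ) (h1 : B1 ∈ G) (h2 : B2 ∈ G) (hi : (B1 ∩ B2).card = i + 1)
    (hij : i ≤ q + j + 1) :
    2 * (q + j + 2).choose (j + 2) + ∑ l ∈ range (i + 1), (q + j + 1 - l).choose (j + 1)
      ≤ (missF V (j + 2) G).card + (q + i).choose (j + 2) := by
  have hsub : B1 ∩ B2 ⊆ V := inter_subset_left.trans (hGV _ h1)
  have hle : (B1 ∩ B2).card ≤ j + 3 := by
    rw [← hG _ h1]; exact card_le_card inter_subset_left
  have hI := lossI V G (j + 3) (j + 1) (q + j + 1) hG (by omega) (B1 ∩ B2) hsub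
    (fun y hy => hne y (hsub hy)) (by omega)
  rw [hi] at hI
  have := pair_loss V G q j i hV hGV hG B1 B2 h1 h2 hi ((V.powersetCard (j + 1 + 1)).filter
      (fun A => ¬ Disjoint A (B1 ∩ B2) ∧ ∃ B ∈ G, Disjoint A B)) (by
      intro A hA
      rw [mem_filter] at hA
      refine ⟨by rw [missF, mem_filter]; exact ⟨hA.1, hA.2.2⟩, fun h => hA.2.1 ?_, fun h => hA.2.1 ?_⟩
      · exact h.mono_right (inter_subset_left)
      · exact h.mono_right (inter_subset_right))
  omega

/-- Main loss estimate. -/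
lemma lossA (V : Finset ℕ) (G : Finset (Finset ℕ)) (q j : ℕ)
    (hV : V.card = q + 2 * j + 5) (hGV : ∀ B ∈ G, B ⊆ V) (hG : ∀ B ∈ G, B.card = j + 3)
    (hne : ∀ y ∈ V, ∃ B ∈ G, y ∉ B) (hInt : ∀ A ∈ G, ∀ B ∈ G, (A ∩ B).Nonempty) :
    2 * (q + j + 2).choose (j + 2) + (q + j + 1).choose (j + 1) ≤
      (missF V (j + 2) G).card + q.choose (j + 2) := by
  obtain ⟨y0, hy0⟩ : V.Nonempty := card_pos.1 (by omega)
  obtain ⟨B1, h1, -⟩ := hne y0 hy0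
  obtain ⟨y, hy⟩ : B1.Nonempty := card_pos.1 (by rw [hG _ h1]; omega)
  obtain ⟨B2, h2, hy2⟩ := hne y (hGV _ h1 hy)
  obtain ⟨i, hi⟩ : ∃ i, (B1 ∩ B2).card = i + 1 :=
    ⟨(B1 ∩ B2).card - 1, by have := card_pos.2 (hInt _ h1 _ h2); omega⟩
  have hlt : (B1 ∩ B2).card < B1.card := by
    apply card_lt_card
    refine ⟨inter_subset_left, fun h => hy2 (mem_inter.1 (h hy)).2⟩
  rw [hG _ h1] at hlt
  have := pair_loss_I V G q j i hV hGV hG hne B1 B2 h1 h2 hi (by omega)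
  have := arithA q j i (by omega)
  omega

lemma inter_card_lt {A B : Finset ℕ} {k : ℕ} (hA : A.card = k) (hB : B.card = k) (hne : A ≠ B) :
    (A ∩ B).card < k := by
  by_contra h
  push Not at h
  have e1 : A ∩ B = A := eq_of_subset_of_card_le inter_subset_left (by omega)
  have e2 : A ∩ B = B := eq_of_subset_of_card_le inter_subset_right (by omega)
  exact hne (e1.symm.trans e2)

lemma alpha_key (V : Finset ℕ) (G : Finset (Finset ℕ)) (j : ℕ) (hj : 1 ≤ j)
    (hG : ∀ B ∈ G, B.card = j + 3) (hInt : ∀ A ∈ G, ∀ B ∈ G, (A ∩ B).Nonempty)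
    (h4 : 4 ≤ G.card) (B1 B2 B3 : Finset ℕ) (h1 : B1 ∈ G) (h2 : B2 ∈ G) (h3 : B3 ∈ G) (y : ℕ)
    (hy : B1 ∩ B2 = {y}) (hy3 : y ∉ B3) (hK : B2.erase y ⊆ B3)
    (hall : ∀ B ∈ G, B1.erase y ⊆ B ∨ B2.erase y ⊆ B) :
    ∃ B4 ∈ G, ∃ b ∈ B3, y ∉ B4 ∧ b ∉ B4 ∧ b ≠ y := by
  have hy1 : y ∈ B1 := (mem_inter.1 (hy ▸ mem_singleton_self y)).1
  have hy2 : y ∈ B2 := (mem_inter.1 (hy ▸ mem_singleton_self y)).2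
  have honly : ∀ z, z ∈ B1 → z ∈ B2 → z = y := fun z a b => by
    have : z ∈ B1 ∩ B2 := mem_inter.2 ⟨a, b⟩
    rwa [hy, mem_singleton] at this
  obtain ⟨B4, hB4, hn4⟩ : ∃ B4 ∈ G, B4 ∉ ({B1, B2, B3} : Finset (Finset ℕ)) := by
    by_contra h
    push Not at h
    have := card_le_card h
    have := card_le_three (a := B1) (b := B2) (c := B3)
    omega
  simp only [mem_insert, mem_singleton, not_or] at hn4
  have ce2 : (B2.erase y).card = j + 2 := by rw [card_erase_of_mem hy2, hG _ h2]; omega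
  have ce1 : (B1.erase y).card = j + 2 := by rw [card_erase_of_mem hy1, hG _ h1]; omega
  rcases hall B4 hB4 with h | h
  · have hy4 : y ∉ B4 := by
      intro h5
      have : B1 ⊆ B4 := by
        intro z hz
        by_cases hzy : z = y
        · rw [hzy]; exact h5
        · exact h (mem_erase.2 ⟨hzy, hz⟩)
      exact hn4.1 (eq_of_subset_of_card_le this (by rw [hG _ h1, hG _ hB4])).symm
    have : ∃ b ∈ B2.erase y, b ∉ B4 := by
      by_contra h6
      push Not at h6
      have hsub : B1.erase y ∪ B2.erase y ⊆ B4 := union_subset h h6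
      have hd : Disjoint (B1.erase y) (B2.erase y) := by
        rw [disjoint_left]; intro z hz hz'
        rw [mem_erase] at hz hz'
        exact hz.1 (honly z hz.2 hz'.2)
      have := card_le_card hsub
      rw [card_union_of_disjoint hd, hG _ hB4] at this
      omega
    obtain ⟨b, hb, hb4⟩ := this
    exact ⟨B4, hB4, b, hK hb, hy4, hb4, (mem_erase.1 hb).1⟩
  · have hy4 : y ∉ B4 := by
      intro h5
      have : B2 ⊆ B4 := by
        intro z hz
        by_cases hzy : z = y
        · rw [hzy]; exact h5
        · exact h (mem_erase.2 ⟨hzy, hz⟩)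
      exact hn4.2.1 (eq_of_subset_of_card_le this (by rw [hG _ h2, hG _ hB4])).symm
    obtain ⟨z, hz⟩ := hInt _ h1 _ h3
    rw [mem_inter] at hz
    have hzy : z ≠ y := fun e => hy3 (e ▸ hz.2)
    have hz2 : z ∉ B2.erase y := fun hh => hzy (honly z hz.1 (mem_erase.1 hh).2)
    have e3 : insert z (B2.erase y) = B3 :=
      eq_of_subset_of_card_le (insert_subset hz.2 hK) (by
        rw [card_insert_of_notMem hz2, ce2, hG _ h3])
    refine ⟨B4, hB4, z, hz.2, hy4, fun hz4 => ?_, hzy⟩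
    have : B3 ⊆ B4 := by rw [← e3]; exact insert_subset hz4 h
    exact hn4.2.2 (eq_of_subset_of_card_le this (by rw [hG _ h3, hG _ hB4])).symm

lemma lossC_alpha (V : Finset ℕ) (G : Finset (Finset ℕ)) (q j : ℕ) (hj : 1 ≤ j)
    (hV : V.card = q + 2 * j + 5) (hGV : ∀ B ∈ G, B ⊆ V) (hG : ∀ B ∈ G, B.card = j + 3)
    (hne : ∀ y ∈ V, ∃ B ∈ G, y ∉ B) (hInt : ∀ A ∈ G, ∀ B ∈ G, (A ∩ B).Nonempty)
    (h4 : 4 ≤ G.card) (B1 B2 : Finset ℕ) (h1 : B1 ∈ G) (h2 : B2 ∈ G) (hi : (B1 ∩ B2).card = 1) :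
    2 * (q + j + 2).choose (j + 2) + (q + j + 1).choose (j + 1) + q.choose j ≤
      (missF V (j + 2) G).card + q.choose (j + 2) := by
  obtain ⟨y, hy⟩ := card_eq_one.1 hi
  have hy1 : y ∈ B1 := (mem_inter.1 (hy ▸ mem_singleton_self y)).1
  have hy2 : y ∈ B2 := (mem_inter.1 (hy ▸ mem_singleton_self y)).2
  have honly : ∀ z, z ∈ B1 → z ∈ B2 → z = y := fun z a b => by
    have : z ∈ B1 ∩ B2 := mem_inter.2 ⟨a, b⟩
    rwa [hy, mem_singleton] at this
  obtain ⟨B3, h3, hy3⟩ := hne y (hGV _ h1 hy1)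
  have key : ∃ S W : Finset ℕ, S ⊆ V ∧ S.card = 2 ∧ Disjoint S W ∧ W.card ≤ j + 4 ∧
      (∃ B ∈ G, B ⊆ W) ∧ (∃ a ∈ S, a ∈ B1) ∧ (∃ a ∈ S, a ∈ B2) ∧
      (y ∈ W ∨ ∃ a ∈ S, a ∈ B3) := by
    by_cases hall : ∀ B ∈ G, B1.erase y ⊆ B ∨ B2.erase y ⊆ B
    · have hk : ∃ B4 ∈ G, ∃ b ∈ B3, y ∉ B4 ∧ b ∉ B4 ∧ b ≠ y := by
        rcases hall B3 h3 with h | h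
        · exact alpha_key V G j hj hG hInt h4 B2 B1 B3 h2 h1 h3 y (by rw [inter_comm]; exact hy)
            hy3 h (fun B hB => (hall B hB).symm)
        · exact alpha_key V G j hj hG hInt h4 B1 B2 B3 h1 h2 h3 y hy hy3 h hall
      obtain ⟨B4, hB4, b, hb, hy4, hb4, hby⟩ := hk
      refine ⟨{y, b}, B4, ?_, card_pair (Ne.symm hby), ?_, by rw [hG _ hB4]; omega,
        ⟨B4, hB4, Subset.rfl⟩, ⟨y, by simp, hy1⟩, ⟨y, by simp, hy2⟩, Or.inr ⟨b, by simp, hb⟩⟩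
      · intro z hz
        rw [mem_insert, mem_singleton] at hz
        rcases hz with rfl | rfl
        · exact hGV _ h1 hy1
        · exact hGV _ h3 hb
      · simp [hy4, hb4]
    · push Not at hall
      obtain ⟨B, hB, hb1, hb2⟩ := hall
      obtain ⟨a, ha, haB⟩ := not_subset.1 hb1
      obtain ⟨b, hb, hbB⟩ := not_subset.1 hb2
      rw [mem_erase] at ha hb
      have hab : a ≠ b := fun e => ha.1 (honly a ha.2 (e ▸ hb.2))
      refine ⟨{a, b}, insert y B, ?_, card_pair hab, ?_, ?_, ⟨B, hB, subset_insert _ _⟩,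
        ⟨a, by simp, ha.2⟩, ⟨b, by simp, hb.2⟩, Or.inl (mem_insert_self _ _)⟩
      · intro z hz
        rw [mem_insert, mem_singleton] at hz
        rcases hz with rfl | rfl
        · exact hGV _ h1 ha.2
        · exact hGV _ h2 hb.2
      · simp [haB, hbB, Ne.symm ha.1, Ne.symm hb.1]
      · have := card_insert_le y B
        have := hG B hB
        omega
  obtain ⟨S, W, hSV, hS2, hSW, hW, ⟨B, hB, hBW⟩, ⟨a1, ha1, ha1'⟩, ⟨a2, ha2, ha2'⟩, hor⟩ := key
  have c1 := count_lb V {y} B3 (j + 2) (j + 1) (q + j + 1)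
    (by simpa using hGV _ h1 hy1) (by simpa using hy3) (by simp; omega)
    (by rw [hG _ h3]; simp; omega)
  have c2 := count_lb V S W (j + 2) j q hSV hSW (by omega) (by omega)
  have := pair_loss V G q j 0 hV hGV hG B1 B2 h1 h2 hi
    ((V.powersetCard (j + 2)).filter (fun A => {y} ⊆ A ∧ Disjoint A B3) ∪
      (V.powersetCard (j + 2)).filter (fun A => S ⊆ A ∧ Disjoint A W)) (by
      intro A hA
      simp only [mem_union, mem_filter, singleton_subset_iff] at hA
      rcases hA with ⟨hA, hyA, hd⟩ | ⟨hA, hSA, hd⟩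
      · refine ⟨mem_filter.2 ⟨hA, B3, h3, hd⟩, fun h => disjoint_left.1 h hyA hy1,
          fun h => disjoint_left.1 h hyA hy2⟩
      · refine ⟨mem_filter.2 ⟨hA, B, hB, hd.mono_right hBW⟩, fun h => ?_, fun h => ?_⟩
        · exact disjoint_left.1 h (hSA ha1) ha1'
        · exact disjoint_left.1 h (hSA ha2) ha2')
  rw [card_union_of_disjoint] at this
  · simp only [add_zero] at this; omega
  · rw [disjoint_left]
    intro A hA hA'
    simp only [mem_filter, singleton_subset_iff] at hA hA'
    rcases hor with h | ⟨a, ha, ha3⟩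
    · exact disjoint_left.1 hA'.2.2 hA.2.1 h
    · exact disjoint_left.1 hA.2.2 (hA'.2.1 ha) ha3

lemma lossC_gamma (V : Finset ℕ) (G : Finset (Finset ℕ)) (q j : ℕ)
    (hV : V.card = q + 2 * j + 5) (hGV : ∀ B ∈ G, B ⊆ V) (hG : ∀ B ∈ G, B.card = j + 3)
    (hne : ∀ y ∈ V, ∃ B ∈ G, y ∉ B)
    (hall : ∀ A ∈ G, ∀ B ∈ G, A ≠ B → (A ∩ B).card = j + 2)
    (B1 B2 : Finset ℕ) (h1 : B1 ∈ G) (h2 : B2 ∈ G) (h12 : B1 ≠ B2) :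
    2 * (q + j + 2).choose (j + 2) + (q + j + 1).choose (j + 1) + q.choose j ≤
      (missF V (j + 2) G).card + q.choose (j + 2) := by
  have hi := hall B1 h1 B2 h2 h12
  have hsub : B1 ∩ B2 ⊆ V := inter_subset_left.trans (hGV _ h1)
  choose! g hg hg' using hne
  have hsub1 : ∀ B ∈ G, ∀ y ∈ B, y ∈ V → B.erase y ⊆ g y := by
    intro B hB y hy hyV
    have hneq : B ≠ g y := fun e => hg' y hyV (e ▸ hy)
    have hc := hall B hB (g y) (hg y hyV) hneq
    have hs : B ∩ g y ⊆ B.erase y := by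
      intro z hz
      rw [mem_inter] at hz
      exact mem_erase.2 ⟨fun e => hg' y hyV (e ▸ hz.2), hz.1⟩
    have := eq_of_subset_of_card_le hs (by rw [card_erase_of_mem hy, hG _ hB, hc]; omega)
    rw [← this]; exact inter_subset_right
  let X : ℕ → Finset (Finset ℕ) := fun y =>
    (V.powersetCard (j + 2)).filter (fun A => {y} ⊆ A ∧ Disjoint A (g y))
  have hX : ∀ y ∈ B1 ∩ B2, (q + j + 1).choose (j + 1) ≤ (X y).card := by
    intro y hy
    exact count_lb V {y} (g y) (j + 2) (j + 1) (q + j + 1)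
      (by simpa using hsub hy) (by simpa using hg' y (hsub hy)) (by simp; omega)
      (by rw [hG _ (hg y (hsub hy))]; simp; omega)
  have := pair_loss V G q j (j + 1) hV hGV hG B1 B2 h1 h2 hi ((B1 ∩ B2).biUnion X) (by
    intro A hA
    rw [mem_biUnion] at hA
    obtain ⟨y, hy, hA⟩ := hA
    simp only [X, mem_filter, singleton_subset_iff] at hA
    refine ⟨mem_filter.2 ⟨hA.1, g y, hg y (hsub hy), hA.2.2⟩,
      fun h => disjoint_left.1 h hA.2.1 (mem_inter.1 hy).1,
      fun h => disjoint_left.1 h hA.2.1 (mem_inter.1 hy).2⟩)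
  rw [card_biUnion] at this
  · have h5 : (j + 2) * (q + j + 1).choose (j + 1) ≤ ∑ y ∈ B1 ∩ B2, (X y).card := by
      have := card_nsmul_le_sum (B1 ∩ B2) (fun y => (X y).card) _ hX
      rwa [hi, smul_eq_mul] at this
    have e1 : ∀ i, (q + i).choose (j + 2) = q.choose (j + 2) +
        ∑ l ∈ range i, (q + l).choose (j + 1) := by
      intro i
      induction i with
      | zero => simp
      | succ i ih =>
        rw [sum_range_succ, ← add_assoc q i 1, Nat.choose_succ_succ' (q + i) (j + 1), ih]; ring
    have e2 := e1 (j + 1)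
    rw [sum_range_succ'] at e2
    have e3 : ∑ l ∈ range j, (q + (l + 1)).choose (j + 1) ≤ j * (q + j + 1).choose (j + 1) := by
      have := sum_le_card_nsmul (range j) (fun l => (q + (l + 1)).choose (j + 1))
        ((q + j + 1).choose (j + 1)) (fun l hl => Nat.choose_le_choose _ (by
          rw [mem_range] at hl; omega))
      rwa [card_range, smul_eq_mul] at this
    have e4 := Nat.choose_succ_succ' q j
    have e5 : (q + 1).choose (j + 1) ≤ (q + j + 1).choose (j + 1) :=
      Nat.choose_le_choose _ (by omega)
    simp only [add_zero] at e2
    have e6 : (j + 2) * (q + j + 1).choose (j + 1) = j * (q + j + 1).choose (j + 1) +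
      2 * (q + j + 1).choose (j + 1) := by ring
    omega
  · intro y hy z hz hyz
    rw [Function.onFun, disjoint_left]
    intro A hA hA'
    simp only [X, mem_filter, singleton_subset_iff] at hA hA'
    rw [mem_coe, mem_inter] at hy hz
    have : y ∈ g z := hsub1 B1 h1 z hz.1 (hGV _ h1 hz.1) (mem_erase.2 ⟨hyz, hy.1⟩)
    exact disjoint_left.1 hA'.2.2 hA.2.1 this

lemma lossC (V : Finset ℕ) (G : Finset (Finset ℕ)) (q j : ℕ) (hj : 1 ≤ j)
    (hV : V.card = q + 2 * j + 5) (hGV : ∀ B ∈ G, B ⊆ V) (hG : ∀ B ∈ G, B.card = j + 3)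
    (hne : ∀ y ∈ V, ∃ B ∈ G, y ∉ B) (hInt : ∀ A ∈ G, ∀ B ∈ G, (A ∩ B).Nonempty)
    (h4 : 4 ≤ G.card) :
    2 * (q + j + 2).choose (j + 2) + (q + j + 1).choose (j + 1) + q.choose j ≤
      (missF V (j + 2) G).card + q.choose (j + 2) := by
  by_cases hall : ∀ A ∈ G, ∀ B ∈ G, A ≠ B → (A ∩ B).card = j + 2
  · obtain ⟨B1, h1, B2, h2, h12⟩ := one_lt_card.1 (show 1 < G.card by omega)
    exact lossC_gamma V G q j hV hGV hG hne hall B1 B2 h1 h2 h12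
  · push Not at hall
    obtain ⟨B1, h1, B2, h2, h12, hc⟩ := hall
    have hp := card_pos.2 (hInt _ h1 _ h2)
    have hlt := inter_card_lt (hG _ h1) (hG _ h2) h12
    by_cases hc1 : (B1 ∩ B2).card = 1
    · exact lossC_alpha V G q j hj hV hGV hG hne hInt h4 B1 B2 h1 h2 hc1
    · obtain ⟨i, hi⟩ : ∃ i, (B1 ∩ B2).card = i + 1 := ⟨(B1 ∩ B2).card - 1, by omega⟩
      have := pair_loss_I V G q j i hV hGV hG hne B1 B2 h1 h2 hi (by omega)
      have := arithA' q j i (by omega) (by omega)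
      omega

open scoped FinsetFamily

lemma kk_miss (V : Finset ℕ) (G : Finset (Finset ℕ)) (m k s : ℕ) (hV : V.card = m)
    (hGV : ∀ B ∈ G, B ⊆ V) (hG : ∀ B ∈ G, B.card = k) (hs : s ≤ k) (hk : 1 ≤ k)
    (hm : 2 * k ≤ m) (hc : (m - s).choose (k - s) ≤ G.card) :
    (m - s).choose (k - 1) ≤ (missF V (k - 1) G).card := by
  classical
  let e : Fin m ↪ ℕ := (V.orderEmbOfFin hV).toEmbedding
  have he : ∀ x, e x ∈ V := fun x => orderEmbOfFin_mem V hV x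
  have he' : ∀ v ∈ V, ∃ x, e x = v := by
    intro v hv
    have : v ∈ Set.range (V.orderEmbOfFin hV) := by rw [range_orderEmbOfFin]; exact hv
    exact this
  let 𝒜 : Finset (Finset (Fin m)) := ((univ : Finset (Fin m)).powersetCard (m - k)).filter
    (fun S => V \ S.map e ∈ G)
  have hsz : (𝒜 : Set (Finset (Fin m))).Sized (m - k) := by
    intro S hS
    simp only [𝒜, mem_coe, mem_filter, mem_powersetCard] at hS
    exact hS.1.2
  have key : ∀ B ∈ G, (univ.filter (fun x => e x ∉ B)).map e = V \ B := by
    intro B hB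
    ext v
    simp only [mem_map, mem_filter, mem_univ, true_and, mem_sdiff]
    constructor
    · rintro ⟨x, hx, rfl⟩; exact ⟨he x, hx⟩
    · rintro ⟨hv, hvB⟩
      obtain ⟨x, rfl⟩ := he' v hv
      exact ⟨x, hvB, rfl⟩
  have hle : G.card ≤ 𝒜.card := by
    apply card_le_card_of_injOn (fun B => univ.filter (fun x => e x ∉ B))
    · intro B hB
      have hB' : B ∈ G := hB
      simp only [𝒜, coe_filter, Set.mem_ofPred_eq, mem_powersetCard, subset_univ, true_and]
      constructor
      · rw [← card_map e, key B hB', card_sdiff_of_subset (hGV B hB'), hV, hG B hB']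
      · rw [key B hB', Finset.sdiff_sdiff_eq_self (hGV B hB')]; exact hB'
    · intro B hB B' hB' h
      have hB1 : B ∈ G := hB
      have hB1' : B' ∈ G := hB'
      simp only at h
      rw [← Finset.sdiff_sdiff_eq_self (hGV B hB1), ← Finset.sdiff_sdiff_eq_self (hGV B' hB1'), ← key B hB1,
        ← key B' hB1', h]
  have h := Finset.kruskal_katona_lovasz_form (i := m - k - (k - 1)) (r := m - k) (k := m - s)
    (n := m) (by omega) (by omega) (by omega) hsz (by
      refine le_trans (le_of_eq ?_) (hc.trans hle)
      exact Nat.choose_symm_of_eq_add (by omega))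
  rw [show m - k - (m - k - (k - 1)) = k - 1 by omega] at h
  refine h.trans ?_
  apply card_le_card_of_injOn (fun t => t.map e)
  · intro t ht
    rw [mem_coe, mem_shadow_iterate_iff_exists_mem_card_add] at ht
    obtain ⟨S, hS, htS, hcard⟩ := ht
    have hS2 := hsz hS
    simp only [𝒜, mem_filter] at hS
    simp only [missF, coe_filter, Set.mem_ofPred_eq, mem_powersetCard, card_map]
    refine ⟨⟨?_, by omega⟩, _, hS.2, ?_⟩
    · intro v hv
      obtain ⟨x, -, rfl⟩ := mem_map.1 hv
      exact he x
    · exact disjoint_sdiff.mono_left (map_subset_map.2 htS)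
  · intro t _ t' _ h
    exact map_injective e h

lemma card_supersets_le (U : Finset ℕ) (𝒜 : Finset (Finset ℕ)) (n k : ℕ) (hU : U.card = n)
    (hA : 𝒜 ⊆ U.powersetCard k) (S : Finset ℕ) (hSU : S ⊆ U) :
    (𝒜.filter (fun A => S ⊆ A)).card ≤ (n - S.card).choose (k - S.card) := by
  rw [← hU, ← card_sdiff_of_subset hSU, ← card_powersetCard]
  apply card_le_card_of_injOn (fun A => A \ S)
  · intro A hA'
    simp only [coe_filter, Set.mem_ofPred_eq] at hA'
    have := mem_powersetCard.1 (hA hA'.1)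
    rw [mem_coe, mem_powersetCard]
    refine ⟨sdiff_subset_sdiff this.1 Subset.rfl, ?_⟩
    rw [card_sdiff_of_subset hA'.2, this.2]
  · intro A hA' B hB' h
    simp only [coe_filter, Set.mem_ofPred_eq] at hA' hB'
    simp only at h
    rw [← sdiff_union_of_subset hA'.2, ← sdiff_union_of_subset hB'.2, h]

lemma branching (U : Finset ℕ) (𝒜 : Finset (Finset ℕ)) (n k b q : ℕ) (hU : U.card = n)
    (hA : 𝒜 ⊆ U.powersetCard k) (S0 : Finset ℕ)
    (hB : ∀ S, S0 ⊆ S → S.card ≤ q → (∃ A ∈ 𝒜, S ⊆ A) →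
      ∃ B : Finset ℕ, B.card ≤ b ∧ Disjoint B S ∧ ∀ A ∈ 𝒜, S ⊆ A → (A ∩ B).Nonempty) :
    ∀ (d : ℕ) (S : Finset ℕ), S0 ⊆ S → S.card + d = q + 1 →
      (𝒜.filter (fun A => S ⊆ A)).card ≤ b ^ d * (n - (q + 1)).choose (k - (q + 1)) := by
  intro d
  induction d with
  | zero =>
    intro S hS hc
    by_cases hne : ∃ A ∈ 𝒜, S ⊆ A
    · obtain ⟨A, hA1, hSA⟩ := hne
      have := card_supersets_le U 𝒜 n k hU hA S (hSA.trans (mem_powersetCard.1 (hA hA1)).1)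
      rw [show S.card = q + 1 by omega] at this
      simpa using this
    · have : 𝒜.filter (fun A => S ⊆ A) = ∅ := by
        rw [filter_eq_empty_iff]; intro A hA1 h; exact hne ⟨A, hA1, h⟩
      rw [this]; simp
  | succ d ih =>
    intro S hS hc
    by_cases hne : ∃ A ∈ 𝒜, S ⊆ A
    · obtain ⟨B, hBb, hBS, hBA⟩ := hB S hS (by omega) hne
      have hsub : 𝒜.filter (fun A => S ⊆ A) ⊆
          B.biUnion (fun z => 𝒜.filter (fun A => insert z S ⊆ A)) := by
        intro A hA1
        rw [mem_filter] at hA1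
        obtain ⟨z, hz⟩ := hBA A hA1.1 hA1.2
        rw [mem_inter] at hz
        rw [mem_biUnion]
        exact ⟨z, hz.2, mem_filter.2 ⟨hA1.1, insert_subset hz.1 hA1.2⟩⟩
      calc _ ≤ _ := card_le_card hsub
        _ ≤ B.card * (b ^ d * (n - (q + 1)).choose (k - (q + 1))) := by
          apply card_biUnion_le_card_mul
          intro z hz
          apply ih
          · exact hS.trans (subset_insert _ _)
          · rw [card_insert_of_notMem (disjoint_left.1 hBS hz)]; omega
        _ ≤ b * (b ^ d * (n - (q + 1)).choose (k - (q + 1))) := Nat.mul_le_mul_right _ hBb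
        _ = _ := by rw [pow_succ]; ring
    · have : 𝒜.filter (fun A => S ⊆ A) = ∅ := by
        rw [filter_eq_empty_iff]; intro A hA1 h; exact hne ⟨A, hA1, h⟩
      rw [this]; simp

/-- no cover of size at most two -/
def tau3 (F : Finset (Finset ℕ)) : Prop :=
  ∀ S : Finset ℕ, S.card ≤ 2 → ∃ B ∈ F, Disjoint B S

/-- not containing x -/
def Gx (F : Finset (Finset ℕ)) (x : ℕ) : Finset (Finset ℕ) := F.filter (fun A => x ∉ A)

/-- containing x -/
def Fx (F : Finset (Finset ℕ)) (x : ℕ) : Finset (Finset ℕ) := F.filter (fun A => x ∈ A)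

def isCov (F : Finset (Finset ℕ)) (T : Finset ℕ) : Prop := ∀ A ∈ F, (A ∩ T).Nonempty

lemma not_isCov {F : Finset (Finset ℕ)} {T : Finset ℕ} (h : ¬ isCov F T) :
    ∃ B ∈ F, Disjoint B T := by
  unfold isCov at h
  push Not at h
  obtain ⟨B, hB, h⟩ := h
  exact ⟨B, hB, disjoint_iff_inter_eq_empty.2 h⟩

lemma lemmaP (U : Finset ℕ) (F : Finset (Finset ℕ)) (n k x : ℕ) (hU : U.card = n)
    (hF : F ⊆ U.powersetCard k) (hx : x ∈ U) (hk : 4 ≤ k) (ht : tau3 F)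
    (hInt : ∀ A ∈ F, ∀ B ∈ F, (A ∩ B).Nonempty)
    (hG : 16 * (n - 4).choose (k - 4) < (Gx F x).card) :
    (Fx F x).card ≤ 3 * k * (n - 3).choose (k - 3) + k ^ 3 * (n - 4).choose (k - 4) := by
  classical
  let P : Finset (Finset ℕ) := ((U.erase x).powersetCard 2).filter (fun p => isCov F (insert x p))
  have hvc : ∃ S : Finset ℕ, S.card ≤ 3 ∧ ∀ p ∈ P, ¬ Disjoint p S := by
    by_contra hno
    push Not at hno
    have := branching U (Gx F x) n k 2 3 hU ((filter_subset _ _).trans hF) ∅ (by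
      intro S _ hS _
      obtain ⟨p, hp, hd⟩ := hno S hS
      simp only [P, mem_filter, mem_powersetCard] at hp
      refine ⟨p, by omega, hd, fun A hA _ => ?_⟩
      simp only [Gx, mem_filter] at hA
      obtain ⟨z, hz⟩ := hp.2 A hA.1
      rw [mem_inter, mem_insert] at hz
      rcases hz with ⟨hz1, rfl | hz2⟩
      · exact absurd hz1 hA.2
      · exact ⟨z, mem_inter.2 ⟨hz1, hz2⟩⟩) 4 ∅ Subset.rfl (by simp)
    simp only [empty_subset, filter_true] at this
    norm_num at this
    omega
  obtain ⟨S, hS, hcov⟩ := hvc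
  -- degrees
  have hdeg : ∀ v, (P.filter (fun p => v ∈ p)).card ≤ k := by
    intro v
    obtain ⟨B, hB, hd⟩ := ht {x, v} card_le_two
    have hBk := (mem_powersetCard.1 (hF hB)).2
    rw [← hBk]
    have : P.filter (fun p => v ∈ p) ⊆ B.image (fun w => ({v, w} : Finset ℕ)) := by
      intro p hp
      simp only [P, mem_filter, mem_powersetCard] at hp
      obtain ⟨w, hw⟩ := hp.1.2 B hB
      rw [mem_inter, mem_insert] at hw
      have hxB : x ∉ B := fun h => disjoint_left.1 hd h (by simp)
      have hvB : v ∉ B := fun h => disjoint_left.1 hd h (by simp)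
      have hwx : w ≠ x := fun e => hxB (e ▸ hw.1)
      have hwv : w ≠ v := fun e => hvB (e ▸ hw.1)
      have hwp : w ∈ p := by tauto
      rw [mem_image]
      refine ⟨w, hw.1, eq_of_subset_of_card_le ?_ ?_⟩
      · intro z hz; rw [mem_insert, mem_singleton] at hz; rcases hz with rfl | rfl
        · exact hp.2
        · exact hwp
      · rw [hp.1.1.2, card_pair hwv.symm]
    exact (card_le_card this).trans card_image_le
  have hP : P.card ≤ 3 * k := by
    have : P ⊆ S.biUnion (fun v => P.filter (fun p => v ∈ p)) := by
      intro p hp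
      have := hcov p hp
      rw [not_disjoint_iff] at this
      obtain ⟨v, hv, hvS⟩ := this
      exact mem_biUnion.2 ⟨v, hvS, mem_filter.2 ⟨hp, hv⟩⟩
    calc _ ≤ _ := card_le_card this
      _ ≤ S.card * k := card_biUnion_le_card_mul _ _ _ (fun v _ => hdeg v)
      _ ≤ 3 * k := Nat.mul_le_mul_right _ hS
  -- split
  let R := (Fx F x).filter (fun A => ∀ p ∈ P, ¬ p ⊆ A)
  have hR : R.card ≤ k ^ 3 * (n - 4).choose (k - 4) := by
    have := branching U R n k k 3 hU ((filter_subset _ _).trans ((filter_subset _ _).trans hF)) {x} (by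
      intro S hxS hS3 ⟨A, hA, hSA⟩
      have hno : ¬ isCov F S := by
        intro hc
        simp only [R, Fx, mem_filter] at hA
        have hAk := mem_powersetCard.1 (hF hA.1.1)
        obtain ⟨T, hST, hTA, hT3⟩ := exists_subsuperset_card_eq hSA hS3 (by omega)
        have hxT : x ∈ T := hST (by simpa using hxS)
        refine hA.2 (T.erase x) ?_ ((erase_subset _ _).trans hTA)
        simp only [P, mem_filter, mem_powersetCard]
        refine ⟨⟨?_, ?_⟩, ?_⟩
        · exact erase_subset_erase _ (hTA.trans hAk.1)
        · rw [card_erase_of_mem hxT]; omega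
        · rw [insert_erase hxT]
          intro A' hA'
          exact (hc A' hA').mono (inter_subset_inter_left hST)
      obtain ⟨B, hB, hd⟩ := not_isCov hno
      refine ⟨B, (mem_powersetCard.1 (hF hB)).2.le, hd, fun A hA hSA => ?_⟩
      simp only [R, Fx, mem_filter] at hA
      exact hInt A hA.1.1 B hB) 3 {x} Subset.rfl (by simp)
    have e : R.filter (fun A => {x} ⊆ A) = R := by
      rw [filter_eq_self]; intro A hA
      simp only [R, Fx, mem_filter] at hA
      simpa using hA.1.2
    rwa [e] at this
  have hsub : Fx F x ⊆ R ∪ P.biUnion (fun p => F.filter (fun A => insert x p ⊆ A)) := by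
    intro A hA
    by_cases h : ∀ p ∈ P, ¬ p ⊆ A
    · exact mem_union_left _ (mem_filter.2 ⟨hA, h⟩)
    · push Not at h
      obtain ⟨p, hp, hpA⟩ := h
      refine mem_union_right _ (mem_biUnion.2 ⟨p, hp, mem_filter.2 ⟨?_, ?_⟩⟩)
      · exact (mem_filter.1 hA).1
      · exact insert_subset (mem_filter.1 hA).2 hpA
  calc _ ≤ _ := card_le_card hsub
    _ ≤ R.card + (P.biUnion (fun p => F.filter (fun A => insert x p ⊆ A))).card := card_union_le _ _
    _ ≤ k ^ 3 * (n - 4).choose (k - 4) + 3 * k * (n - 3).choose (k - 3) := by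
      refine Nat.add_le_add hR ?_
      refine (card_biUnion_le_card_mul _ _ ((n - 3).choose (k - 3)) ?_).trans
        (Nat.mul_le_mul_right _ hP)
      intro p hp
      simp only [P, mem_filter, mem_powersetCard] at hp
      have hxp : x ∉ p := fun h => (mem_erase.1 (hp.1.1 h)).1 rfl
      have := card_supersets_le U F n k hU hF (insert x p)
        (insert_subset hx (hp.1.1.trans (erase_subset _ _)))
      rwa [card_insert_of_notMem hxp, hp.1.2] at this
    _ = _ := by ring

open scoped FinsetFamily

def isInt (F : Finset (Finset ℕ)) : Prop := ∀ A ∈ F, ∀ B ∈ F, (A ∩ B).Nonempty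

lemma katona_base (U : Finset ℕ) (k : ℕ) (G : Finset (Finset ℕ)) (hG : G ⊆ U.powersetCard k)
    (hk : 1 ≤ k) (hU : U.card + 1 ≤ 2 * k) : G.card ≤ (∂ G).card := by
  have h := card_mul_le_card_mul (s := G) (t := ∂ G) (m := k) (n := k) (fun A t => t ⊆ A) (by
    intro A hA
    have hAk := (mem_powersetCard.1 (hG hA)).2
    calc k = (A.image (fun a => A.erase a)).card := by
          rw [card_image_of_injOn, hAk]
          intro a ha b hb h
          simp only at h
          by_contra hab
          have : b ∈ A.erase a := mem_erase.2 ⟨Ne.symm hab, hb⟩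
          rw [h] at this; simp at this
      _ ≤ _ := by
        apply card_le_card
        intro t ht
        obtain ⟨a, ha, rfl⟩ := mem_image.1 ht
        rw [mem_bipartiteAbove]
        exact ⟨erase_mem_shadow hA ha, erase_subset _ _⟩) (by
    intro t ht
    rw [mem_shadow_iff] at ht
    obtain ⟨A, hA, a, ha, rfl⟩ := ht
    have hAk := mem_powersetCard.1 (hG hA)
    have hc : (A.erase a).card = k - 1 := by rw [card_erase_of_mem ha, hAk.2]
    have hs : A.erase a ⊆ U := (erase_subset _ _).trans hAk.1
    calc _ ≤ ((U \ A.erase a).image (fun b => insert b (A.erase a))).card := by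
          apply card_le_card
          intro B hB
          rw [mem_bipartiteBelow] at hB
          have hBk := mem_powersetCard.1 (hG hB.1)
          have h1 : (B \ A.erase a).card = 1 := by
            rw [card_sdiff_of_subset hB.2]; omega
          obtain ⟨b, hb⟩ := card_eq_one.1 h1
          have hb' : b ∈ B \ A.erase a := by rw [hb]; simp
          rw [mem_sdiff] at hb'
          rw [mem_image]
          refine ⟨b, mem_sdiff.2 ⟨hBk.1 hb'.1, hb'.2⟩, ?_⟩
          rw [← union_sdiff_of_subset hB.2, hb, union_comm]; simp
      _ ≤ _ := card_image_le
      _ ≤ k := by rw [card_sdiff_of_subset hs]; omega)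
  exact Nat.le_of_mul_le_mul_right h (by omega)

lemma katona (m : ℕ) : ∀ (k : ℕ) (G : Finset (Finset ℕ)), G ⊆ (Ico 2 m).powersetCard k → 1 ≤ k →
    isInt G → (∀ A ∈ G, ∀ j ∈ A, ∀ i, 2 ≤ i → i < j → i ∉ A → insert i (A.erase j) ∈ G) →
    G.card ≤ (∂ G).card := by
  induction m with
  | zero =>
    intro k G hG hk _ _
    exact katona_base _ k G hG hk (by simp; omega)
  | succ m ih =>
    intro k G hG hk hInt hsh
    by_cases hm : m ≤ 2 * k
    · exact katona_base _ k G hG hk (by rw [Nat.card_Ico]; omega)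
    by_cases hk1 : k = 1
    · subst hk1
      have hle : G.card ≤ 1 := by
        rw [card_le_one]
        intro A hA B hB
        obtain ⟨a, ha⟩ := card_eq_one.1 (mem_powersetCard.1 (hG hA)).2
        obtain ⟨b, hb⟩ := card_eq_one.1 (mem_powersetCard.1 (hG hB)).2
        obtain ⟨z, hz⟩ := hInt A hA B hB
        rw [ha, hb] at hz ⊢
        simp at hz
        rw [← hz.1, ← hz.2]
      rcases G.eq_empty_or_nonempty with rfl | ⟨A, hA⟩
      · simp
      · obtain ⟨a, ha⟩ := card_eq_one.1 (mem_powersetCard.1 (hG hA)).2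
        have : 0 < (∂ G).card := card_pos.2 ⟨_, erase_mem_shadow hA (a := a) (by rw [ha]; simp)⟩
        omega
    let G0 := G.filter (fun A => m ∉ A)
    let G1 := (G.filter (fun A => m ∈ A)).image (fun A => A.erase m)
    have m1 : ∀ B, B ∈ G1 ↔ m ∉ B ∧ insert m B ∈ G := by
      intro B
      simp only [G1, mem_image, mem_filter]
      constructor
      · rintro ⟨A, ⟨hA, hmA⟩, rfl⟩
        exact ⟨by simp, by rwa [insert_erase hmA]⟩
      · rintro ⟨h1, h2⟩
        exact ⟨_, ⟨h2, by simp⟩, erase_insert h1⟩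
    have hsubI : ∀ A : Finset ℕ, A ⊆ Ico 2 (m + 1) → m ∉ A → A ⊆ Ico 2 m := by
      intro A hA hmA z hz
      have := hA hz
      rw [mem_Ico] at this ⊢
      have : z ≠ m := fun e => hmA (e ▸ hz)
      omega
    have c0 : G.card = G0.card + G1.card := by
      rw [card_image_of_injOn]
      · have := card_filter_add_card_filter_not (s := G) (fun A => m ∈ A)
        simp only [G0]; omega
      · intro A hA B hB h
        simp only [coe_filter, Set.mem_ofPred_eq] at hA hB
        simp only at h
        rw [← insert_erase hA.2, h, insert_erase hB.2]
    have i0 := ih k G0 (by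
        intro A hA
        have hA' := mem_filter.1 hA
        have := mem_powersetCard.1 (hG hA'.1)
        exact mem_powersetCard.2 ⟨hsubI A this.1 hA'.2, this.2⟩) hk
      (fun A hA B hB => hInt A (mem_filter.1 hA).1 B (mem_filter.1 hB).1)
      (by
        intro A hA j hj i hi hij hiA
        have hA' := mem_filter.1 hA
        have := mem_powersetCard.1 (hG hA'.1)
        have hjm := mem_Ico.1 (this.1 hj)
        refine mem_filter.2 ⟨hsh A hA'.1 j hj i hi hij hiA, ?_⟩
        rw [mem_insert, mem_erase]
        rintro (h | h)
        · omega
        · exact hA'.2 h.2)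
    have hG1 : G1 ⊆ (Ico 2 m).powersetCard (k - 1) := by
        intro A hA
        have hA' := (m1 A).1 hA
        have := mem_powersetCard.1 (hG hA'.2)
        refine mem_powersetCard.2 ⟨hsubI A ((subset_insert _ _).trans this.1) hA'.1, ?_⟩
        rw [card_insert_of_notMem hA'.1] at this
        omega
    have i1 := ih (k - 1) G1 hG1 (by omega)
      (by
        intro A hA B hB
        by_contra hcon
        rw [not_nonempty_iff_eq_empty] at hcon
        have hA' := (m1 A).1 hA
        have hB' := (m1 B).1 hB
        have hAc := (mem_powersetCard.1 (hG1 hA))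
        have hBc := (mem_powersetCard.1 (hG1 hB))
        obtain ⟨z, hz, hzn⟩ : ∃ z ∈ Ico 2 m, z ∉ A ∪ B := by
          by_contra hno
          push Not at hno
          have h1 := card_le_card (show Ico 2 m ⊆ A ∪ B from hno)
          have := card_union_le A B
          rw [Nat.card_Ico] at h1
          omega
        rw [mem_Ico] at hz
        rw [mem_union, not_or] at hzn
        have h3 := hsh (insert m A) hA'.2 m (by simp) z hz.1 hz.2 (by
          rw [mem_insert, not_or]; exact ⟨by omega, hzn.1⟩)
        rw [erase_insert hA'.1] at h3
        obtain ⟨w, hw⟩ := hInt _ h3 _ hB'.2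
        rw [mem_inter, mem_insert, mem_insert] at hw
        rcases hw with ⟨rfl | h4, rfl | h5⟩
        · omega
        · exact hzn.2 h5
        · exact hA'.1 h4
        · have : w ∈ A ∩ B := mem_inter.2 ⟨h4, h5⟩
          rw [hcon] at this; simp at this)
      (by
        intro A hA j hj i hi hij hiA
        have hA' := (m1 A).1 hA
        have hAc := (mem_powersetCard.1 (hG1 hA))
        have hjm := mem_Ico.1 (hAc.1 hj)
        rw [m1]
        constructor
        · rw [mem_insert, mem_erase]
          rintro (h | h)
          · omega
          · exact hA'.1 h.2
        · have := hsh _ hA'.2 j (mem_insert_of_mem hj) i hi hij (by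
            rw [mem_insert, not_or]; exact ⟨by omega, hiA⟩)
          rwa [erase_insert_of_ne (by omega), insert_comm] at this)
    have hn0 : ∀ t ∈ ∂ G0, m ∉ t := by
      intro t ht
      obtain ⟨A, hA, a, ha, rfl⟩ := mem_shadow_iff.1 ht
      intro h
      exact (mem_filter.1 hA).2 (mem_of_mem_erase h)
    have hn1 : ∀ t ∈ ∂ G1, m ∉ t := by
      intro t ht
      obtain ⟨A, hA, a, ha, rfl⟩ := mem_shadow_iff.1 ht
      intro h
      exact ((m1 A).1 hA).1 (mem_of_mem_erase h)
    have hfin : ∂ G0 ∪ (∂ G1).image (fun t => insert m t) ⊆ ∂ G := by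
      apply union_subset
      · exact shadow_mono (filter_subset _ _)
      · intro t ht
        obtain ⟨t, ht2, rfl⟩ := mem_image.1 ht
        obtain ⟨A, hA, a, ha, rfl⟩ := mem_shadow_iff.1 ht2
        have hA' := (m1 A).1 hA
        have ham : a ≠ m := fun e => hA'.1 (e ▸ ha)
        rw [← erase_insert_of_ne ham.symm]
        exact erase_mem_shadow hA'.2 (mem_insert_of_mem ha)
    have hcc := card_le_card hfin
    rw [card_union_of_disjoint, card_image_of_injOn] at hcc
    · omega
    · intro s hs t ht h
      simp only at h
      rw [← erase_insert (hn1 s hs), h, erase_insert (hn1 t ht)]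
    · rw [disjoint_left]
      intro t ht ht'
      obtain ⟨s, hs, rfl⟩ := mem_image.1 ht'
      exact hn0 _ ht (by simp)

open scoped FinsetFamily

def shA (i j : ℕ) (A : Finset ℕ) : Finset ℕ := if j ∈ A ∧ i ∉ A then insert i (A.erase j) else A

def shf (F : Finset (Finset ℕ)) (i j : ℕ) (A : Finset ℕ) : Finset ℕ :=
  if shA i j A ∈ F then A else shA i j A

def Good (n k : ℕ) (F : Finset (Finset ℕ)) : Prop :=
  F ⊆ (Icc 1 n).powersetCard k ∧ isInt F ∧ tau3 F

/-- Either the set is unchanged, or it is really moved out of the family. -/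
lemma shf_cases (F : Finset (Finset ℕ)) (i j : ℕ) (A : Finset ℕ) (hA : A ∈ F) :
    (shf F i j A = A ∧ (j ∈ A → i ∉ A → insert i (A.erase j) ∈ F)) ∨
    (j ∈ A ∧ i ∉ A ∧ shf F i j A = insert i (A.erase j) ∧ insert i (A.erase j) ∉ F) := by
  unfold shf shA
  by_cases h : j ∈ A ∧ i ∉ A
  · simp only [h, and_self, not_false_eq_true, if_true]
    by_cases h2 : insert i (A.erase j) ∈ F
    · left; simp [h2]
    · right; simp [h2]
  · left
    simp only [h, if_false, hA, if_true, true_and]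
    intro h1 h2; exact absurd ⟨h1, h2⟩ h

lemma shf_inj (F : Finset (Finset ℕ)) (i j : ℕ) : Set.InjOn (shf F i j) F := by
  intro A hA B hB h
  rcases shf_cases F i j A hA with ⟨a1, a2⟩ | ⟨a1, a2, a3, a4⟩ <;>
  rcases shf_cases F i j B hB with ⟨b1, b2⟩ | ⟨b1, b2, b3, b4⟩
  · rw [← a1, h, b1]
  · exfalso; apply b4; rw [← b3, ← h, a1]; exact hA
  · exfalso; apply a4; rw [← a3, h, b1]; exact hB
  · rw [a3, b3] at h
    have e : A.erase j = B.erase j := by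
      rw [← erase_insert (s := A.erase j) (a := i) (fun hh => a2 (mem_of_mem_erase hh)), h,
        erase_insert (fun hh => b2 (mem_of_mem_erase hh))]
    rw [← insert_erase a1, e, insert_erase b1]

lemma shf_int (F : Finset (Finset ℕ)) (i j : ℕ) (h : isInt F) : isInt (F.image (shf F i j)) := by
  have mixed : ∀ A ∈ F, ∀ B ∈ F, (j ∈ A → i ∉ A → insert i (A.erase j) ∈ F) → j ∈ B → i ∉ B →
      (A ∩ insert i (B.erase j)).Nonempty := by
    intro A hA B hB hA2 hjB hiB
    by_cases hiA : i ∈ A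
    · exact ⟨i, by simp [hiA]⟩
    by_cases hjA : j ∈ A
    · obtain ⟨z, hz⟩ := h _ (hA2 hjA hiA) B hB
      simp only [mem_inter, mem_insert, mem_erase] at hz
      rcases hz with ⟨rfl | h1, h2⟩
      · exact absurd h2 hiB
      · exact ⟨z, by simp [h1, h2]⟩
    · obtain ⟨z, hz⟩ := h A hA B hB
      rw [mem_inter] at hz
      exact ⟨z, by simp only [mem_inter, mem_insert, mem_erase]; exact ⟨hz.1, Or.inr ⟨fun e => hjA (e ▸ hz.1), hz.2⟩⟩⟩
  intro A' hA' B' hB'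
  obtain ⟨A, hA, rfl⟩ := mem_image.1 hA'
  obtain ⟨B, hB, rfl⟩ := mem_image.1 hB'
  rcases shf_cases F i j A hA with ⟨a1, a2⟩ | ⟨a1, a2, a3, a4⟩ <;>
  rcases shf_cases F i j B hB with ⟨b1, b2⟩ | ⟨b1, b2, b3, b4⟩
  · rw [a1, b1]; exact h A hA B hB
  · rw [a1, b3]; exact mixed A hA B hB a2 b1 b2
  · rw [a3, b1, inter_comm]; exact mixed B hB A hA b2 a1 a2
  · rw [a3, b3]; exact ⟨i, by simp⟩

lemma exists_max_deg (n k : ℕ) (F : Finset (Finset ℕ)) (hF : F ⊆ (Icc 1 n).powersetCard k)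
    (hne : F.Nonempty) (T : Finset ℕ) (hT : T.card ≤ 3) (hc : ∀ A ∈ F, ¬ Disjoint A T) :
    ∃ x ∈ Icc 1 n, F.card ≤ 3 * (Fx F x).card := by
  by_contra hcon
  push Not at hcon
  have hp := card_pos.2 hne
  have h1 : ∀ x ∈ T, 3 * (Fx F x).card < F.card := by
    intro x hx
    by_cases hxU : x ∈ Icc 1 n
    · exact hcon x hxU
    · have : Fx F x = ∅ := by
        rw [Fx, filter_eq_empty_iff]
        intro A hA h
        exact hxU ((mem_powersetCard.1 (hF hA)).1 h)
      rw [this]; simp; exact hp.ne'.symm.lt_of_le (Nat.zero_le _) |> fun h => card_pos.1 h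
  have hsub : F ⊆ T.biUnion (fun x => Fx F x) := by
    intro A hA
    obtain ⟨x, hx, hxT⟩ := not_disjoint_iff.1 (hc A hA)
    exact mem_biUnion.2 ⟨x, hxT, mem_filter.2 ⟨hA, hx⟩⟩
  have h2 := card_le_card hsub
  have h3 : (T.biUnion (fun x => Fx F x)).card ≤ T.card * ((F.card - 1) / 3) :=
    card_biUnion_le_card_mul _ _ _ (fun x hx => by have := h1 x hx; omega)
  have h4 : T.card * ((F.card - 1) / 3) ≤ 3 * ((F.card - 1) / 3) := Nat.mul_le_mul_right _ hT
  omega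

lemma shift_main (n k : ℕ) (hk : 1 ≤ k) : ∀ (w : ℕ) (F : Finset (Finset ℕ)),
    ∑ A ∈ F, ∑ a ∈ A, a = w → Good n k F →
    ∃ F', Good n k F' ∧ F'.card = F.card ∧ ∃ x ∈ Icc 1 n, F'.card ≤ 3 * (Fx F' x).card := by
  intro w
  induction w using Nat.strong_induction_on with
  | _ w ih =>
  intro F hw hF
  have hne : F.Nonempty := by
    obtain ⟨B, hB, -⟩ := hF.2.2 ∅ (by simp)
    exact ⟨B, hB⟩
  by_cases hsh : ∀ A ∈ F, ∀ j ∈ A, ∀ i, 1 ≤ i → i < j → i ∉ A → insert i (A.erase j) ∈ F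
  · -- fully shifted
    refine ⟨F, hF, rfl, ?_⟩
    have hUe : ∀ A ∈ F, ∀ a ∈ A, 1 ≤ a ∧ a ≤ n := fun A hA a ha =>
      mem_Icc.1 ((mem_powersetCard.1 (hF.1 hA)).1 ha)
    have hkat := katona (n + 1) k (Gx F 1) (by
      intro A hA
      rw [Gx, mem_filter] at hA
      have := mem_powersetCard.1 (hF.1 hA.1)
      refine mem_powersetCard.2 ⟨fun z hz => ?_, this.2⟩
      have h1 := hUe A hA.1 z hz
      have : z ≠ 1 := fun e => hA.2 (e ▸ hz)
      rw [mem_Ico]; omega) hk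
      (fun A hA B hB => hF.2.1 A (mem_filter.1 hA).1 B (mem_filter.1 hB).1)
      (by
        intro A hA j hj i hi hij hiA
        rw [Gx, mem_filter] at hA ⊢
        refine ⟨hsh A hA.1 j hj i (by omega) hij hiA, ?_⟩
        rw [mem_insert, mem_erase]
        rintro (h | h)
        · omega
        · exact hA.2 h.2)
    have h2 : (∂ (Gx F 1)).card ≤ (Fx F 1).card := by
      apply card_le_card_of_injOn (fun t => insert 1 t)
      · intro t ht
        obtain ⟨A, hA, a, ha, rfl⟩ := mem_shadow_iff.1 ht
        rw [Gx, mem_filter] at hA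
        have h1 := hUe A hA.1 a ha
        have : a ≠ 1 := fun e => hA.2 (e ▸ ha)
        rw [mem_coe, Fx, mem_filter]
        exact ⟨hsh A hA.1 a ha 1 le_rfl (by omega) hA.2, by simp⟩
      · have hn : ∀ t ∈ ∂ (Gx F 1), 1 ∉ t := by
          intro t ht
          obtain ⟨A, hA, a, ha, rfl⟩ := mem_shadow_iff.1 ht
          exact fun h => (mem_filter.1 hA).2 (mem_of_mem_erase h)
        intro s hs t ht h
        simp only at h
        rw [← erase_insert (hn s hs), h, erase_insert (hn t ht)]
    have h3 : (Fx F 1).card + (Gx F 1).card = F.card :=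
      card_filter_add_card_filter_not (s := F) (fun A => 1 ∈ A)
    obtain ⟨A, hA⟩ : (Fx F 1).Nonempty := by
      rw [← card_pos]; have := card_pos.2 hne; omega
    rw [Fx, mem_filter] at hA
    exact ⟨1, (mem_powersetCard.1 (hF.1 hA.1)).1 hA.2, by omega⟩
  · push Not at hsh
    obtain ⟨A0, hA0, j, hj, i, hi1, hij, hiA, hnot⟩ := hsh
    have hmv : ∀ A ∈ F, ∑ a ∈ shf F i j A, a ≤ ∑ a ∈ A, a ∧
        (shf F i j A ≠ A → ∑ a ∈ shf F i j A, a < ∑ a ∈ A, a) := by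
      intro A hA
      rcases shf_cases F i j A hA with ⟨a1, a2⟩ | ⟨a1, a2, a3, a4⟩
      · rw [a1]; simp
      · have e1 : ∑ a ∈ insert i (A.erase j), a = i + ∑ a ∈ A.erase j, a :=
          sum_insert (fun hh => a2 (mem_of_mem_erase hh))
        have e2 := add_sum_erase A (fun a => a) a1
        rw [a3, e1]
        constructor
        · omega
        · intro _; omega
    have hA0m : shf F i j A0 ≠ A0 := by
      rcases shf_cases F i j A0 hA0 with ⟨a1, a2⟩ | ⟨a1, a2, a3, a4⟩
      · exact absurd (a2 hj hiA) hnot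
      · rw [a3]; intro e
        exact a2 (e ▸ mem_insert_self _ _)
    let F1 := F.image (shf F i j)
    have hc1 : F1.card = F.card := card_image_of_injOn (shf_inj F i j)
    have hsub1 : F1 ⊆ (Icc 1 n).powersetCard k := by
      intro A' hA'
      obtain ⟨A, hA, rfl⟩ := mem_image.1 hA'
      rcases shf_cases F i j A hA with ⟨a1, a2⟩ | ⟨a1, a2, a3, a4⟩
      · rw [a1]; exact hF.1 hA
      · rw [a3]
        have := mem_powersetCard.1 (hF.1 hA)
        refine mem_powersetCard.2 ⟨?_, ?_⟩
        · apply insert_subset _ ((erase_subset _ _).trans this.1)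
          have := mem_Icc.1 (this.1 a1)
          rw [mem_Icc]; omega
        · rw [card_insert_of_notMem (fun hh => a2 (mem_of_mem_erase hh)), card_erase_of_mem a1,
            this.2]; omega
    by_cases ht : tau3 F1
    · have hlt : ∑ A ∈ F1, ∑ a ∈ A, a < w := by
        rw [sum_image (shf_inj F i j), ← hw]
        exact sum_lt_sum (fun A hA => (hmv A hA).1) ⟨A0, hA0, (hmv A0 hA0).2 hA0m⟩
      obtain ⟨F', h1, h2, h3⟩ := ih _ hlt F1 rfl ⟨hsub1, shf_int F i j hF.2.1, ht⟩
      exact ⟨F', h1, h2.trans hc1, h3⟩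
    · unfold tau3 at ht
      push Not at ht
      obtain ⟨S, hS, hcov⟩ := ht
      refine ⟨F, hF, rfl, exists_max_deg n k F hF.1 hne (insert j S)
        ((card_insert_le _ _).trans (by omega)) ?_⟩
      intro A hA hd
      rw [disjoint_insert_right] at hd
      refine hcov _ (mem_image_of_mem _ hA) ?_
      rcases shf_cases F i j A hA with ⟨a1, a2⟩ | ⟨a1, a2, a3, a4⟩
      · rw [a1]; exact hd.2
      · exact absurd a1 hd.1

lemma eq_three {D : Finset ℕ} (h : D.card = 3) {x y z : ℕ} (hx : x ∈ D) (hy : y ∈ D) (hz : z ∈ D)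
    (hxy : x ≠ y) (hxz : x ≠ z) (hyz : y ≠ z) : D = {x, y, z} := by
  symm
  apply eq_of_subset_of_card_le
  · intro w hw; simp only [mem_insert, mem_singleton] at hw
    rcases hw with rfl | rfl | rfl <;> assumption
  · rw [h, card_eq_three.2 ⟨x, y, z, hxy, hxz, hyz, rfl⟩]

lemma eq_two {D : Finset ℕ} (h : D.card = 2) {x y : ℕ} (hx : x ∈ D) (hy : y ∈ D)
    (hxy : x ≠ y) : D = {x, y} := by
  symm
  apply eq_of_subset_of_card_le
  · intro w hw; simp only [mem_insert, mem_singleton] at hw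
    rcases hw with rfl | rfl <;> assumption
  · rw [h, card_pair hxy]

lemma star_or_small (E : Finset (Finset ℕ)) (h2 : ∀ e ∈ E, e.card = 2)
    (hInt : ∀ e ∈ E, ∀ f ∈ E, (e ∩ f).Nonempty) (h4 : 4 ≤ E.card) : ∃ y, ∀ e ∈ E, y ∈ e := by
  by_contra hno
  push Not at hno
  obtain ⟨e, he, f, hf, hef⟩ := one_lt_card.1 (show 1 < E.card by omega)
  obtain ⟨u, hu⟩ := hInt e he f hf
  rw [mem_inter] at hu
  obtain ⟨g, hg, hug⟩ := hno u
  obtain ⟨v, hv⟩ := hInt e he g hg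
  obtain ⟨w, hw⟩ := hInt f hf g hg
  rw [mem_inter] at hv hw
  have huv : u ≠ v := fun h => hug (h ▸ hv.2)
  have huw : u ≠ w := fun h => hug (h ▸ hw.2)
  have e1 := eq_two (h2 e he) hu.1 hv.1 huv
  have e2 := eq_two (h2 f hf) hu.2 hw.1 huw
  have hvw : v ≠ w := by rintro rfl; exact hef (e1.trans e2.symm)
  have e3 := eq_two (h2 g hg) hv.2 hw.2 hvw
  have hsub : E ⊆ {e, f, g} := by
    intro d hd
    simp only [mem_insert, mem_singleton]
    obtain ⟨p, hp⟩ := hInt d hd e he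
    obtain ⟨q, hq⟩ := hInt d hd f hf
    obtain ⟨r, hr⟩ := hInt d hd g hg
    rw [mem_inter] at hp hq hr
    have hd2 := h2 d hd
    have key : (u ∈ d ∧ v ∈ d) ∨ (u ∈ d ∧ w ∈ d) ∨ (v ∈ d ∧ w ∈ d) := by
      rw [e1] at hp; rw [e2] at hq; rw [e3] at hr
      simp only [mem_insert, mem_singleton] at hp hq hr
      rcases hp with ⟨hp, rfl | rfl⟩ <;> rcases hq with ⟨hq, rfl | rfl⟩ <;>
        rcases hr with ⟨hr, rfl | rfl⟩ <;> tauto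
    rcases key with ⟨k1, k2⟩ | ⟨k1, k2⟩ | ⟨k1, k2⟩
    · left; rw [e1]; exact eq_two hd2 k1 k2 huv
    · right; left; rw [e2]; exact eq_two hd2 k1 k2 huw
    · right; right; rw [e3]; exact eq_two hd2 k1 k2 hvw
  have := card_le_card hsub
  have := card_le_three (a := e) (b := f) (c := g)
  omega

lemma k3_star (F : Finset (Finset ℕ)) (h3 : ∀ A ∈ F, A.card = 3) (hInt : isInt F) (ht : tau3 F)
    (a b c : ℕ) (hab : a ≠ b) (hac : a ≠ c) (hbc : b ≠ c) (hT : ({a, b, c} : Finset ℕ) ∈ F) (y : ℕ)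
    (hya : y ≠ a) (hy : ∀ A ∈ F.filter (fun A => a ∈ A ∧ b ∉ A ∧ c ∉ A), y ∈ A) :
    (F.filter (fun A => a ∈ A ∧ b ∉ A ∧ c ∉ A)).card ≤ 2 := by
  obtain ⟨D, hD, hd⟩ := ht {a, y} card_le_two
  have haD : a ∉ D := fun h => disjoint_left.1 hd h (by simp)
  have hyD : y ∉ D := fun h => disjoint_left.1 hd h (by simp)
  have hlt : (D \ {b, c}).card ≤ 2 := by
    have : (D \ {b, c}).card < D.card := by
      apply card_lt_card
      refine ⟨sdiff_subset, fun h => ?_⟩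
      obtain ⟨z, hz⟩ := hInt D hD _ hT
      simp only [mem_inter, mem_insert, mem_singleton] at hz
      have := h hz.1
      simp only [mem_sdiff, mem_insert, mem_singleton] at this
      rcases hz.2 with rfl | h1 | h1
      · exact haD hz.1
      · exact this.2 (Or.inl h1)
      · exact this.2 (Or.inr h1)
    rw [h3 D hD] at this; omega
  refine le_trans ?_ hlt
  refine le_trans (card_le_card (t := (D \ {b, c}).image (fun u => {a, y, u})) ?_) card_image_le
  intro A hA
  have hyA := hy A hA
  rw [mem_filter] at hA
  obtain ⟨u, hu⟩ := hInt A hA.1 D hD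
  rw [mem_inter] at hu
  rw [mem_image]
  refine ⟨u, ?_, ?_⟩
  · simp only [mem_sdiff, mem_insert, mem_singleton, not_or]
    exact ⟨hu.2, fun e => hA.2.2.1 (e ▸ hu.1), fun e => hA.2.2.2 (e ▸ hu.1)⟩
  · exact (eq_three (h3 A hA.1) hA.2.1 hyA hu.1 hya.symm (fun e => haD (e ▸ hu.2))
      (fun e => hyD (e ▸ hu.2))).symm

lemma tri_disj {z a b c d e f : ℕ} (h : (z = a ∨ z = b ∨ z = c) ∧ (z = d ∨ z = e ∨ z = f))
    (h1 : a ≠ d) (h2 : a ≠ e) (h3 : a ≠ f) (h4 : b ≠ d) (h5 : b ≠ e) (h6 : b ≠ f)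
    (h7 : c ≠ d) (h8 : c ≠ e) (h9 : c ≠ f) : False := by
  rcases h with ⟨rfl | rfl | rfl, h | h | h⟩ <;> contradiction

set_option maxHeartbeats 1000000 in
lemma k3_four (F : Finset (Finset ℕ)) (h3 : ∀ A ∈ F, A.card = 3) (hInt : isInt F) (ht : tau3 F)
    (a b c : ℕ) (hab : a ≠ b) (hac : a ≠ c) (hbc : b ≠ c) (hT : ({a, b, c} : Finset ℕ) ∈ F)
    (hV : F.filter (fun A => a ∉ A ∧ b ∈ A ∧ c ∈ A) = ∅) :
    (F.filter (fun A => a ∈ A ∧ b ∉ A ∧ c ∉ A)).card ≤ 3 := by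
  by_contra h4
  push Not at h4
  set E := F.filter (fun A => a ∈ A ∧ b ∉ A ∧ c ∉ A) with hE
  have hEm : ∀ A, A ∈ E ↔ A ∈ F ∧ a ∈ A ∧ b ∉ A ∧ c ∉ A := by intro A; rw [hE, mem_filter]
  have hVm : ∀ A ∈ F, a ∉ A → b ∈ A → c ∉ A := by
    intro A hA h1 h2 h3
    rw [filter_eq_empty_iff] at hV
    exact hV hA ⟨h1, h2, h3⟩
  -- two members of E meeting only in a
  have hdisj : ∃ A ∈ E, ∃ B ∈ E, ¬ ((A.erase a) ∩ (B.erase a)).Nonempty := by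
    by_contra hno
    push Not at hno
    have hinj : Set.InjOn (fun A : Finset ℕ => A.erase a) E := by
      intro A hA B hB h
      simp only at h
      rw [← insert_erase ((hEm A).1 hA).2.1, h, insert_erase ((hEm B).1 hB).2.1]
    obtain ⟨y, hy⟩ := star_or_small (E.image (fun A => A.erase a))
      (by
        intro e he
        obtain ⟨A, hA, rfl⟩ := mem_image.1 he
        have := (hEm A).1 hA
        rw [card_erase_of_mem this.2.1, h3 A this.1])
      (by
        intro e he f hf
        obtain ⟨A, hA, rfl⟩ := mem_image.1 he
        obtain ⟨B, hB, rfl⟩ := mem_image.1 hf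
        exact hno A hA B hB) (by rw [card_image_of_injOn hinj]; omega)
    obtain ⟨A, hA⟩ : E.Nonempty := card_pos.1 (by omega)
    have hya : y ≠ a := (mem_erase.1 (hy _ (mem_image_of_mem _ hA))).1
    have := k3_star F h3 hInt ht a b c hab hac hbc hT y hya
      (fun A hA => mem_of_mem_erase (hy _ (mem_image_of_mem _ hA)))
    rw [← hE] at this
    omega
  obtain ⟨A1, hA1, A2, hA2, hd⟩ := hdisj
  have hA1' := (hEm A1).1 hA1
  have hA2' := (hEm A2).1 hA2
  obtain ⟨u, v, huv, e1⟩ := card_eq_two.1 (show (A1.erase a).card = 2 by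
    rw [card_erase_of_mem hA1'.2.1, h3 A1 hA1'.1])
  obtain ⟨w, x, hwx, e2⟩ := card_eq_two.1 (show (A2.erase a).card = 2 by
    rw [card_erase_of_mem hA2'.2.1, h3 A2 hA2'.1])
  have f1 : A1 = {a, u, v} := by rw [← insert_erase hA1'.2.1, e1]
  have f2 : A2 = {a, w, x} := by rw [← insert_erase hA2'.2.1, e2]
  have hu1 : u ∈ A1.erase a := by rw [e1]; simp
  have hv1 : v ∈ A1.erase a := by rw [e1]; simp
  have hw1 : w ∈ A2.erase a := by rw [e2]; simp
  have hx1 : x ∈ A2.erase a := by rw [e2]; simp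
  rw [not_nonempty_iff_eq_empty, e1, e2, ← disjoint_iff_inter_eq_empty] at hd
  simp only [disjoint_insert_left, disjoint_singleton_left, mem_insert, mem_singleton, not_or] at hd
  obtain ⟨⟨huw, hux⟩, hvw, hvx⟩ := hd
  rw [mem_erase] at hu1 hv1 hw1 hx1
  have ub : u ≠ b := fun e => hA1'.2.2.1 (e ▸ hu1.2)
  have uc : u ≠ c := fun e => hA1'.2.2.2 (e ▸ hu1.2)
  have vb : v ≠ b := fun e => hA1'.2.2.1 (e ▸ hv1.2)
  have vc : v ≠ c := fun e => hA1'.2.2.2 (e ▸ hv1.2)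
  have wb : w ≠ b := fun e => hA2'.2.2.1 (e ▸ hw1.2)
  have wc : w ≠ c := fun e => hA2'.2.2.2 (e ▸ hw1.2)
  have xb : x ≠ b := fun e => hA2'.2.2.1 (e ▸ hx1.2)
  have xc : x ≠ c := fun e => hA2'.2.2.2 (e ▸ hx1.2)
  -- structure of members avoiding a
  have hstr : ∀ D ∈ F, a ∉ D → ∃ l p r, (l = b ∨ l = c) ∧ (p = u ∨ p = v) ∧ (r = w ∨ r = x) ∧
      D = {l, p, r} := by
    intro D hD haD
    obtain ⟨l, hl⟩ := hInt D hD _ hT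
    obtain ⟨p, hp⟩ := hInt D hD _ hA1'.1
    obtain ⟨r, hr⟩ := hInt D hD _ hA2'.1
    rw [f1] at hp; rw [f2] at hr
    simp only [mem_inter, mem_insert, mem_singleton] at hl hp hr
    have l1 : l = b ∨ l = c := by
      rcases hl.2 with rfl | h | h
      · exact absurd hl.1 haD
      · exact Or.inl h
      · exact Or.inr h
    have p1 : p = u ∨ p = v := by
      rcases hp.2 with rfl | h | h
      · exact absurd hp.1 haD
      · exact Or.inl h
      · exact Or.inr h
    have r1 : r = w ∨ r = x := by
      rcases hr.2 with rfl | h | h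
      · exact absurd hr.1 haD
      · exact Or.inl h
      · exact Or.inr h
    refine ⟨l, p, r, l1, p1, r1, eq_three (h3 D hD) hl.1 hp.1 hr.1 ?_ ?_ ?_⟩
    · rcases l1 with rfl | rfl <;> rcases p1 with rfl | rfl <;> first | exact Ne.symm ‹_›
    · rcases l1 with rfl | rfl <;> rcases r1 with rfl | rfl <;> first | exact Ne.symm ‹_›
    · rcases p1 with rfl | rfl <;> rcases r1 with rfl | rfl <;> assumption
  have hmiss : ∀ z, ∃ l p r, (l = b ∨ l = c) ∧ (p = u ∨ p = v) ∧ (r = w ∨ r = x) ∧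
      ({l, p, r} : Finset ℕ) ∈ F ∧ l ≠ z ∧ p ≠ z ∧ r ≠ z := by
    intro z
    obtain ⟨D, hD, hd⟩ := ht {a, z} card_le_two
    obtain ⟨l, p, r, h1, h2, h3, rfl⟩ := hstr D hD (fun h => disjoint_left.1 hd h (by simp))
    refine ⟨l, p, r, h1, h2, h3, hD, ?_, ?_, ?_⟩
    · intro e; exact disjoint_left.1 hd (show l ∈ _ by simp) (by simp [e])
    · intro e; exact disjoint_left.1 hd (show p ∈ _ by simp) (by simp [e])
    · intro e; exact disjoint_left.1 hd (show r ∈ _ by simp) (by simp [e])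
  -- opposite pair
  have hopp : ∃ l1 l2 r r', (l1 = b ∨ l1 = c) ∧ (l2 = b ∨ l2 = c) ∧
      ((r = w ∧ r' = x) ∨ (r = x ∧ r' = w)) ∧ ({l1, u, r} : Finset ℕ) ∈ F ∧
      ({l2, v, r'} : Finset ℕ) ∈ F := by
    obtain ⟨l1, p1, r1, hl1, hp1, hr1, hD1, -, hpu, -⟩ := hmiss u
    obtain ⟨l2, p2, r2, hl2, hp2, hr2, hD2, -, hpv, -⟩ := hmiss v
    rw [hp1.resolve_left hpu] at hD1
    rw [hp2.resolve_right hpv] at hD2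
    by_cases hrr : r1 = r2
    · rw [← hrr] at hD2
      obtain ⟨l3, p3, r3, hl3, hp3, hr3, hD3, -, -, hr31⟩ := hmiss r1
      have hc : (r3 = w ∧ r1 = x) ∨ (r3 = x ∧ r1 = w) := by omega
      have hc' : (r1 = w ∧ r3 = x) ∨ (r1 = x ∧ r3 = w) := by omega
      rcases hp3 with hp3 | hp3
      · rw [hp3] at hD3
        exact ⟨l3, l1, r3, r1, hl3, hl1, hc, hD3, hD1⟩
      · rw [hp3] at hD3
        exact ⟨l2, l3, r1, r3, hl2, hl3, hc', hD2, hD3⟩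
    · refine ⟨l2, l1, r2, r1, hl2, hl1, ?_, hD2, hD1⟩
      omega
  obtain ⟨l1, l2, r, r', hl1, hl2, hr, hD1, hD2⟩ := hopp
  have hrr' : r ≠ r' := by rcases hr with ⟨rfl, rfl⟩ | ⟨rfl, rfl⟩ <;> [exact hwx; exact hwx.symm]
  have hur : u ≠ r := by rcases hr with ⟨rfl, rfl⟩ | ⟨rfl, rfl⟩ <;> assumption
  have hur' : u ≠ r' := by rcases hr with ⟨rfl, rfl⟩ | ⟨rfl, rfl⟩ <;> assumption
  have hvr : v ≠ r := by rcases hr with ⟨rfl, rfl⟩ | ⟨rfl, rfl⟩ <;> assumption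
  have hvr' : v ≠ r' := by rcases hr with ⟨rfl, rfl⟩ | ⟨rfl, rfl⟩ <;> assumption
  have hra : r ≠ a := by rcases hr with ⟨rfl, rfl⟩ | ⟨rfl, rfl⟩ <;> [exact hw1.1; exact hx1.1]
  have hra' : r' ≠ a := by rcases hr with ⟨rfl, rfl⟩ | ⟨rfl, rfl⟩ <;> [exact hx1.1; exact hw1.1]
  have hrl : r ≠ b ∧ r ≠ c ∧ r' ≠ b ∧ r' ≠ c := by
    rcases hr with ⟨rfl, rfl⟩ | ⟨rfl, rfl⟩ <;> exact ⟨‹_›, ‹_›, ‹_›, ‹_›⟩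
  have hll : l1 = l2 := by
    obtain ⟨z, hz⟩ := hInt _ hD1 _ hD2
    simp only [mem_inter, mem_insert, mem_singleton] at hz
    obtain ⟨q1, q2, q3, q4⟩ := hrl
    rcases hz with ⟨rfl | rfl | rfl, h | h | h⟩
    · exact h
    · exfalso; rcases hl1 with h' | h' <;> omega
    · exfalso; rcases hl1 with h' | h' <;> omega
    · exfalso; rcases hl2 with h' | h' <;> omega
    · exact absurd h huv
    · exact absurd h hur'
    · exfalso; rcases hl2 with h' | h' <;> omega
    · exact absurd h.symm hvr
    · exact absurd h hrr'
  subst hll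
  -- all four sets are in E
  have hE4 : E ⊆ {{a, u, v}, {a, u, r'}, {a, r, v}, {a, r, r'}} := by
    intro A hA
    have hA' := (hEm A).1 hA
    obtain ⟨s, hs⟩ := hInt A hA'.1 _ hD1
    obtain ⟨t, ht⟩ := hInt A hA'.1 _ hD2
    simp only [mem_inter, mem_insert, mem_singleton] at hs ht
    have hl1A : l1 ∉ A := by rcases hl1 with rfl | rfl; exact hA'.2.2.1; exact hA'.2.2.2
    have s1 : s = u ∨ s = r := by
      rcases hs.2 with h | h
      · exact absurd (h ▸ hs.1) hl1A
      · exact h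
    have t1 : t = v ∨ t = r' := by
      rcases ht.2 with h | h
      · exact absurd (h ▸ ht.1) hl1A
      · exact h
    have hA3 : A = {a, s, t} := by
      apply eq_three (h3 A hA'.1) hA'.2.1 hs.1 ht.1
      · rcases s1 with rfl | rfl
        · exact hu1.1.symm
        · exact hra.symm
      · rcases t1 with rfl | rfl
        · exact hv1.1.symm
        · exact hra'.symm
      · rcases s1 with rfl | rfl <;> rcases t1 with rfl | rfl <;>
          first | assumption | exact Ne.symm ‹_›
    simp only [mem_insert, mem_singleton]
    rw [hA3]
    rcases s1 with rfl | rfl <;> rcases t1 with rfl | rfl <;> simp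
  have hEq := eq_of_subset_of_card_le hE4 (le_trans card_le_four (by omega))
  have m2 : ({a, u, r'} : Finset ℕ) ∈ F := ((hEm _).1 (by rw [hEq]; simp)).1
  have m3 : ({a, r, v} : Finset ℕ) ∈ F := ((hEm _).1 (by rw [hEq]; simp)).1
  obtain ⟨l3, p3, r3, hl3, hp3, hr3, hD3, hne3, -, -⟩ := hmiss l1
  have hr3' : r3 = r ∨ r3 = r' := by
    rcases hr with ⟨e1, e2⟩ | ⟨e1, e2⟩
    · rw [e1, e2]; exact hr3
    · rw [e1, e2]; exact hr3.symm
  obtain ⟨z1, hz1⟩ := hInt _ hD1 _ hD3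
  obtain ⟨z2, hz2⟩ := hInt _ hD2 _ hD3
  obtain ⟨z3, hz3⟩ := hInt _ m2 _ hD3
  obtain ⟨z4, hz4⟩ := hInt _ m3 _ hD3
  simp only [mem_inter, mem_insert, mem_singleton] at hz1 hz2 hz3 hz4
  obtain ⟨q1, q2, q3, q4⟩ := hrl
  have hl3a : l3 ≠ a := by rcases hl3 with rfl | rfl; exact hab.symm; exact hac.symm
  have l3u : l3 ≠ u := by rcases hl3 with rfl | rfl; exact ub.symm; exact uc.symm
  have l3v : l3 ≠ v := by rcases hl3 with rfl | rfl; exact vb.symm; exact vc.symm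
  have l3r : l3 ≠ r := by rcases hl3 with rfl | rfl; exact q1.symm; exact q2.symm
  have l3r' : l3 ≠ r' := by rcases hl3 with rfl | rfl; exact q3.symm; exact q4.symm
  have l1u : l1 ≠ u := by rcases hl1 with rfl | rfl; exact ub.symm; exact uc.symm
  have l1v : l1 ≠ v := by rcases hl1 with rfl | rfl; exact vb.symm; exact vc.symm
  have l1r : l1 ≠ r := by rcases hl1 with rfl | rfl; exact q1.symm; exact q2.symm
  have l1r' : l1 ≠ r' := by rcases hl1 with rfl | rfl; exact q3.symm; exact q4.symm
  have hua := hu1.1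
  have hva := hv1.1
  have hl31 : l1 ≠ l3 := hne3.symm
  rcases hp3 with rfl | rfl <;> rcases hr3' with rfl | rfl
  · exact tri_disj hz2 hl31 l1u l1r l3v.symm huv.symm hvr l3r'.symm hur'.symm hrr'.symm
  · exact tri_disj hz4 hl3a.symm hua.symm hra'.symm l3r.symm hur.symm hrr' l3v.symm huv.symm hvr'
  · exact tri_disj hz3 hl3a.symm hva.symm hra.symm l3u.symm huv hur l3r'.symm hvr'.symm hrr'.symm
  · exact tri_disj hz1 hl31 l1v l1r' l3u.symm huv hur' l3r.symm hvr.symm hrr'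

lemma k3_local (F : Finset (Finset ℕ)) (h3 : ∀ A ∈ F, A.card = 3) (hInt : isInt F) (ht : tau3 F)
    (a b c : ℕ) (hab : a ≠ b) (hac : a ≠ c) (hbc : b ≠ c) (hT : ({a, b, c} : Finset ℕ) ∈ F) :
    (F.filter (fun A => a ∈ A ∧ b ∉ A ∧ c ∉ A)).card +
      (F.filter (fun A => a ∉ A ∧ b ∈ A ∧ c ∈ A)).card ≤ 3 := by
  rcases (F.filter (fun A => a ∉ A ∧ b ∈ A ∧ c ∈ A)).eq_empty_or_nonempty with hV | ⟨B, hB⟩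
  · rw [hV]; simpa using k3_four F h3 hInt ht a b c hab hac hbc hT hV
  -- a member of E
  obtain ⟨D, hD, hd⟩ := ht {b, c} card_le_two
  have hbD : b ∉ D := fun h => disjoint_left.1 hd h (by simp)
  have hcD : c ∉ D := fun h => disjoint_left.1 hd h (by simp)
  have haD : a ∈ D := by
    obtain ⟨z, hz⟩ := hInt D hD _ hT
    simp only [mem_inter, mem_insert, mem_singleton] at hz
    rcases hz.2 with rfl | rfl | rfl
    · exact hz.1
    · exact absurd hz.1 hbD
    · exact absurd hz.1 hcD
  have hcross : ∀ A ∈ F.filter (fun A => a ∈ A ∧ b ∉ A ∧ c ∉ A),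
      ∀ B ∈ F.filter (fun A => a ∉ A ∧ b ∈ A ∧ c ∈ A), ∃ z ∈ A, z ≠ a ∧ B = {b, c, z} := by
    intro A hA B hB
    rw [mem_filter] at hA hB
    obtain ⟨z, hz⟩ := hInt A hA.1 B hB.1
    rw [mem_inter] at hz
    refine ⟨z, hz.1, fun e => hB.2.1 (e ▸ hz.2), eq_three (h3 B hB.1) hB.2.2.1 hB.2.2.2 hz.2 hbc
      (fun e => hA.2.2.1 (e ▸ hz.1)) (fun e => hA.2.2.2 (e ▸ hz.1))⟩
  have hDE : D ∈ F.filter (fun A => a ∈ A ∧ b ∉ A ∧ c ∉ A) := mem_filter.2 ⟨hD, haD, hbD, hcD⟩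
  have hV2 : (F.filter (fun A => a ∉ A ∧ b ∈ A ∧ c ∈ A)).card ≤ 2 := by
    have : F.filter (fun A => a ∉ A ∧ b ∈ A ∧ c ∈ A) ⊆ (D.erase a).image (fun z => {b, c, z}) := by
      intro B hB
      obtain ⟨z, hz, hza, rfl⟩ := hcross D hDE B hB
      exact mem_image.2 ⟨z, mem_erase.2 ⟨hza, hz⟩, rfl⟩
    calc _ ≤ _ := card_le_card this
      _ ≤ _ := card_image_le
      _ ≤ 2 := by rw [card_erase_of_mem haD, h3 D hD]
  have hz0 : ∃ z, z ≠ a ∧ ∀ A ∈ F.filter (fun A => a ∈ A ∧ b ∉ A ∧ c ∉ A), z ∈ A := by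
    obtain ⟨z, hz, hza, hBz⟩ := hcross D hDE B hB
    refine ⟨z, hza, fun A hA => ?_⟩
    obtain ⟨z', hz', hza', hBz'⟩ := hcross A hA B hB
    have h1 : z ∈ B := by rw [hBz]; simp
    rw [hBz'] at h1
    simp only [mem_insert, mem_singleton] at h1
    rcases h1 with rfl | rfl | rfl
    · exact absurd hz hbD
    · exact absurd hz hcD
    · exact hz'
  by_cases hone : (F.filter (fun A => a ∉ A ∧ b ∈ A ∧ c ∈ A)).card ≤ 1
  · obtain ⟨z, hza, hz⟩ := hz0
    have := k3_star F h3 hInt ht a b c hab hac hbc hT z hza hz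
    omega
  · obtain ⟨B1, hB1, B2, hB2, hne⟩ := one_lt_card.1 (lt_of_not_ge hone)
    have hE1 : (F.filter (fun A => a ∈ A ∧ b ∉ A ∧ c ∉ A)).card ≤ 1 := by
      have hform : ∀ A ∈ F.filter (fun A => a ∈ A ∧ b ∉ A ∧ c ∉ A), A ⊆ insert a (B1 ∪ B2) ∧
          A = insert a ((B1 ∪ B2) \ {b, c}) := by
        intro A hA
        obtain ⟨z1, hz1, hza1, e1⟩ := hcross A hA B1 hB1
        obtain ⟨z2, hz2, hza2, e2⟩ := hcross A hA B2 hB2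
        have h12 : z1 ≠ z2 := by rintro rfl; exact hne (e1.trans e2.symm)
        rw [mem_filter] at hA
        have := eq_three (h3 A hA.1) hA.2.1 hz1 hz2 hza1.symm hza2.symm h12
        have b1 : z1 ≠ b := fun e => hA.2.2.1 (e ▸ hz1)
        have c1 : z1 ≠ c := fun e => hA.2.2.2 (e ▸ hz1)
        have b2 : z2 ≠ b := fun e => hA.2.2.1 (e ▸ hz2)
        have c2 : z2 ≠ c := fun e => hA.2.2.2 (e ▸ hz2)
        constructor
        · rw [this, e1, e2]; intro t; simp; tauto
        · rw [this, e1, e2]; ext t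
          simp only [mem_insert, mem_singleton, mem_sdiff, mem_union]
          constructor
          · rintro (rfl | rfl | rfl) <;> tauto
          · tauto
      rw [card_le_one]
      intro A hA A' hA'
      rw [(hform A hA).2, (hform A' hA').2]
    omega

theorem k3_thm (F : Finset (Finset ℕ)) (h3 : ∀ A ∈ F, A.card = 3) (hInt : isInt F) (ht : tau3 F) :
    F.card ≤ 10 := by
  obtain ⟨T, hT, -⟩ := ht ∅ (by simp)
  obtain ⟨a, b, c, hab, hac, hbc, rfl⟩ := card_eq_three.1 (h3 T hT)
  have l1 := k3_local F h3 hInt ht a b c hab hac hbc hT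
  have l2 := k3_local F h3 hInt ht b a c hab.symm hbc hac (by rw [insert_comm]; exact hT)
  have l3 := k3_local F h3 hInt ht c a b hac.symm hbc.symm hab (by
    rw [insert_comm, pair_comm c b]; exact hT)
  have hsub : F ⊆ {{a, b, c}} ∪
      ((F.filter (fun A => a ∈ A ∧ b ∉ A ∧ c ∉ A) ∪ F.filter (fun A => a ∉ A ∧ b ∈ A ∧ c ∈ A)) ∪
      ((F.filter (fun A => b ∈ A ∧ a ∉ A ∧ c ∉ A) ∪ F.filter (fun A => b ∉ A ∧ a ∈ A ∧ c ∈ A)) ∪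
      (F.filter (fun A => c ∈ A ∧ a ∉ A ∧ b ∉ A) ∪ F.filter (fun A => c ∉ A ∧ a ∈ A ∧ b ∈ A)))) := by
    intro A hA
    have hm : a ∈ A ∨ b ∈ A ∨ c ∈ A := by
      obtain ⟨z, hz⟩ := hInt A hA _ hT
      simp only [mem_inter, mem_insert, mem_singleton] at hz
      rcases hz with ⟨hz, rfl | rfl | rfl⟩
      · exact Or.inl hz
      · exact Or.inr (Or.inl hz)
      · exact Or.inr (Or.inr hz)
    by_cases h : a ∈ A ∧ b ∈ A ∧ c ∈ A
    · apply mem_union_left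
      rw [mem_singleton]
      exact eq_three (h3 A hA) h.1 h.2.1 h.2.2 hab hac hbc
    · apply mem_union_right
      simp only [mem_union, mem_filter]
      by_cases ha : a ∈ A <;> by_cases hb : b ∈ A <;> by_cases hc : c ∈ A <;>
        simp_all
  have h := card_le_card hsub
  have u1 := card_union_le ({{a, b, c}} : Finset (Finset ℕ)) ((F.filter (fun A => a ∈ A ∧ b ∉ A ∧ c ∉ A) ∪ F.filter (fun A => a ∉ A ∧ b ∈ A ∧ c ∈ A)) ∪
      ((F.filter (fun A => b ∈ A ∧ a ∉ A ∧ c ∉ A) ∪ F.filter (fun A => b ∉ A ∧ a ∈ A ∧ c ∈ A)) ∪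
      (F.filter (fun A => c ∈ A ∧ a ∉ A ∧ b ∉ A) ∪ F.filter (fun A => c ∉ A ∧ a ∈ A ∧ b ∈ A))))
  have u2 := card_union_le (F.filter (fun A => a ∈ A ∧ b ∉ A ∧ c ∉ A) ∪ F.filter (fun A => a ∉ A ∧ b ∈ A ∧ c ∈ A))
      ((F.filter (fun A => b ∈ A ∧ a ∉ A ∧ c ∉ A) ∪ F.filter (fun A => b ∉ A ∧ a ∈ A ∧ c ∈ A)) ∪
      (F.filter (fun A => c ∈ A ∧ a ∉ A ∧ b ∉ A) ∪ F.filter (fun A => c ∉ A ∧ a ∈ A ∧ b ∈ A)))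
  have u3 := card_union_le (F.filter (fun A => b ∈ A ∧ a ∉ A ∧ c ∉ A) ∪ F.filter (fun A => b ∉ A ∧ a ∈ A ∧ c ∈ A))
      (F.filter (fun A => c ∈ A ∧ a ∉ A ∧ b ∉ A) ∪ F.filter (fun A => c ∉ A ∧ a ∈ A ∧ b ∈ A))
  have u4 := card_union_le (F.filter (fun A => a ∈ A ∧ b ∉ A ∧ c ∉ A)) (F.filter (fun A => a ∉ A ∧ b ∈ A ∧ c ∈ A))
  have u5 := card_union_le (F.filter (fun A => b ∈ A ∧ a ∉ A ∧ c ∉ A)) (F.filter (fun A => b ∉ A ∧ a ∈ A ∧ c ∈ A))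
  have u6 := card_union_le (F.filter (fun A => c ∈ A ∧ a ∉ A ∧ b ∉ A)) (F.filter (fun A => c ∉ A ∧ a ∈ A ∧ b ∈ A))
  rw [card_singleton] at u1
  omega

/-- `r`-subsets of `V` meeting all members of `G`. -/
def hitF (V : Finset ℕ) (r : ℕ) (G : Finset (Finset ℕ)) : Finset (Finset ℕ) :=
  (V.powersetCard r).filter (fun A => ¬ ∃ B ∈ G, Disjoint A B)

lemma hit_add_miss (V : Finset ℕ) (r : ℕ) (G : Finset (Finset ℕ)) :
    (missF V r G).card + (hitF V r G).card = V.card.choose r := by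
  rw [missF, hitF, card_filter_add_card_filter_not, card_powersetCard]

lemma mem_T2 {k : ℕ} {B : Finset ℕ} : B ∈ T2fam k ↔ B = Icc 2 (k + 1) ∨
    B = insert 2 (Icc (k + 2) (2 * k)) ∨ B = insert 3 (Icc (k + 2) (2 * k)) := by
  simp [T2fam]

lemma T2_card (k : ℕ) (hk : 3 ≤ k) : (T2fam k).card = 3 := by
  apply card_eq_three.2
  refine ⟨_, _, _, ?_, ?_, ?_, rfl⟩
  · intro h
    have : 3 ∈ insert 2 (Icc (k + 2) (2 * k)) := by rw [← h]; simp; omega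
    simp at this; omega
  · intro h
    have : 2 ∈ insert 3 (Icc (k + 2) (2 * k)) := by rw [← h]; simp; omega
    simp at this; omega
  · intro h
    have : 2 ∈ insert 3 (Icc (k + 2) (2 * k)) := by rw [← h]; simp
    simp at this; omega

lemma T2_sub (k n : ℕ) (hk : 3 ≤ k) (hn : 2 * k ≤ n) {B : Finset ℕ} (hB : B ∈ T2fam k) :
    B ⊆ Icc 2 n := by
  rcases mem_T2.1 hB with rfl | rfl | rfl <;> intro x hx <;> simp at hx ⊢ <;> omega

lemma T2_unif (k : ℕ) (hk : 3 ≤ k) {B : Finset ℕ} (hB : B ∈ T2fam k) : B.card = k := by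
  rcases mem_T2.1 hB with rfl | rfl | rfl
  · simp
  · rw [card_insert_of_notMem (by simp)]; simp; omega
  · rw [card_insert_of_notMem (by simp; omega)]; simp; omega

lemma T2_int (k : ℕ) (hk : 3 ≤ k) : ∀ A ∈ T2fam k, ∀ B ∈ T2fam k, (A ∩ B).Nonempty := by
  intro A hA B hB
  rcases mem_T2.1 hA with rfl | rfl | rfl <;> rcases mem_T2.1 hB with rfl | rfl | rfl
  · exact ⟨2, by simp; omega⟩
  · exact ⟨2, by simp; omega⟩
  · exact ⟨3, by simp; omega⟩
  · exact ⟨2, by simp; omega⟩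
  · exact ⟨2, by simp⟩
  · exact ⟨2 * k, by simp; omega⟩
  · exact ⟨3, by simp; omega⟩
  · exact ⟨2 * k, by simp; omega⟩
  · exact ⟨3, by simp⟩

lemma C3_sub (n k : ℕ) (hk : 3 ≤ k) (hn : 2 * k ≤ n) : C3fam n k ⊆ (Icc 1 n).powersetCard k := by
  intro A hA
  rcases mem_union.1 hA with h | h
  · rw [mem_powersetCard]
    exact ⟨(T2_sub k n hk hn h).trans (Icc_subset_Icc_left (by omega)), T2_unif k hk h⟩
  · exact (mem_filter.1 h).1

lemma C3_int (n k : ℕ) (hk : 3 ≤ k) :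
    ∀ A ∈ C3fam n k, ∀ B ∈ C3fam n k, (A ∩ B).Nonempty := by
  intro A hA B hB
  rcases mem_union.1 hA with h | h <;> rcases mem_union.1 hB with h' | h'
  · exact T2_int k hk A h B h'
  · rw [inter_comm]; exact (mem_filter.1 h').2.2 A h
  · exact (mem_filter.1 h).2.2 B h'
  · exact ⟨1, mem_inter.2 ⟨(mem_filter.1 h).2.1, (mem_filter.1 h').2.1⟩⟩

lemma T2_avoid (k : ℕ) (hk : 3 ≤ k) (y : ℕ) : ∃ B ∈ T2fam k, y ∉ B := by
  by_cases h2 : y = 2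
  · exact ⟨_, mem_T2.2 (Or.inr (Or.inr rfl)), by simp; omega⟩
  by_cases h : y ∈ Icc (k + 2) (2 * k)
  · exact ⟨_, mem_T2.2 (Or.inl rfl), by simp at h ⊢; omega⟩
  · exact ⟨_, mem_T2.2 (Or.inr (Or.inl rfl)), by simp at h ⊢; omega⟩

/-- rectangle pairs hit all members of `T2fam`. -/
lemma T2_pair (k a b : ℕ) (ha : a ∈ Icc 2 (k + 1)) (hb : b ∈ Icc (k + 2) (2 * k)) :
    ∀ B ∈ T2fam k, a ∈ B ∨ b ∈ B := by
  intro B hB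
  rcases mem_T2.1 hB with rfl | rfl | rfl
  · exact Or.inl ha
  · exact Or.inr (mem_insert_of_mem hb)
  · exact Or.inr (mem_insert_of_mem hb)

lemma hit_le_D (n k : ℕ) (hk : 3 ≤ k) (hn : 2 * k ≤ n) :
    (hitF (Icc 2 n) (k - 1) (T2fam k)).card + 3 ≤ (C3fam n k).card := by
  have hd : Disjoint (T2fam k) (((Finset.Icc 1 n).powersetCard k).filter
      (fun A => 1 ∈ A ∧ ∀ B ∈ T2fam k, (A ∩ B).Nonempty)) := by
    rw [disjoint_left]
    intro A hA hA'
    have := T2_sub k n hk hn hA (mem_filter.1 hA').2.1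
    simp at this
  rw [C3fam, card_union_of_disjoint hd, T2_card k hk, add_comm]
  apply Nat.add_le_add_left
  apply card_le_card_of_injOn (fun A => insert 1 A)
  · intro A hA
    simp only [mem_coe, hitF, mem_filter, mem_powersetCard] at hA
    push Not at hA
    have h1 : 1 ∉ A := fun h => by have := hA.1.1 h; simp at this
    simp only [coe_filter, Set.mem_ofPred_eq, mem_powersetCard]
    refine ⟨⟨?_, ?_⟩, mem_insert_self _ _, ?_⟩
    · apply insert_subset (by simp; omega)
      exact hA.1.1.trans (Icc_subset_Icc_left (by omega))
    · rw [card_insert_of_notMem h1, hA.1.2]; omega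
    · intro B hB
      have := hA.2 B hB
      rw [not_disjoint_iff_nonempty_inter] at this
      exact this.mono (inter_subset_inter_right (subset_insert _ _))
  · intro A hA B hB h
    simp only [mem_coe, hitF, mem_filter, mem_powersetCard] at hA hB
    have h1 : 1 ∉ A := fun h => by have := hA.1.1 h; simp at this
    have h2 : 1 ∉ B := fun h => by have := hB.1.1 h; simp at this
    simp only at h
    rw [← erase_insert h1, h, erase_insert h2]

lemma C3_tau (n k : ℕ) (hk : 3 ≤ k) (hn : 3 * k ≤ n) :
    ¬ ∃ S : Finset ℕ, S.card ≤ 2 ∧ covers S (C3fam n k) := by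
  rintro ⟨S, hS, hc⟩
  have hT : ∀ B ∈ T2fam k, (S ∩ B).Nonempty := fun B hB => hc B (mem_union_left _ hB)
  by_cases h1 : 1 ∈ S
  · obtain ⟨y, hy⟩ : ∃ y, S ⊆ {1, y} := by
      have : (S.erase 1).card ≤ 1 := by rw [card_erase_of_mem h1]; omega
      obtain ⟨y, hy⟩ := card_le_one_iff_subset_singleton.1 this
      refine ⟨y, fun z hz => ?_⟩
      by_cases h : z = 1
      · simp [h]
      · have := hy (mem_erase.2 ⟨h, hz⟩); simp at this; simp [this]
    obtain ⟨B, hB, hyB⟩ := T2_avoid k hk y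
    obtain ⟨z, hz⟩ := hT B hB
    rw [mem_inter] at hz
    have := hy hz.1
    simp only [mem_insert, mem_singleton] at this
    rcases this with rfl | rfl
    · have := T2_sub k (2 * k) hk le_rfl hB hz.2; simp at this
    · exact hyB hz.2
  · -- find a set through 1 avoiding S
    -- a in [2,k+1] and b in [k+2,2k] both outside S, or S inside one block
    have hex : ∃ a b, a ∉ S ∧ b ∉ S ∧ a ∈ Icc 2 n ∧ b ∈ Icc 2 n ∧ a ≠ b ∧
        ∀ B ∈ T2fam k, a ∈ B ∨ b ∈ B := by
      by_cases hb : ∃ b ∈ Icc (k + 2) (2 * k), b ∉ S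
      · obtain ⟨b, hb, hbS⟩ := hb
        have : ∃ a ∈ Icc 2 (k + 1), a ∉ S := by
          by_contra hcon
          push Not at hcon
          have := card_le_card (show Icc 2 (k + 1) ⊆ S from hcon)
          simp at this; omega
        obtain ⟨a, ha, haS⟩ := this
        refine ⟨a, b, haS, hbS, ?_, ?_, ?_, T2_pair k a b ha hb⟩ <;> simp at ha hb ⊢ <;> omega
      · push Not at hb
        have hSe : Icc (k + 2) (2 * k) = S := eq_of_subset_of_card_le hb (by simp; omega)
        refine ⟨2, 3, ?_, ?_, by simp; omega, by simp; omega, by omega, ?_⟩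
        · rw [← hSe]; simp
        · rw [← hSe]; simp; omega
        · intro B hB
          rcases mem_T2.1 hB with rfl | rfl | rfl <;> simp; omega
    obtain ⟨a, b, ha, hb, han, hbn, hab, hB⟩ := hex
    have hcard : ((Icc 2 n) \ S).card ≥ k - 1 := by
      have := le_card_sdiff S (Icc 2 n)
      simp at this ⊢; omega
    obtain ⟨R, hR1, hR2, hR3⟩ := exists_subsuperset_card_eq
      (s := {a, b}) (t := (Icc 2 n) \ S) (n := k - 1) (by
        intro z hz; simp only [mem_insert, mem_singleton] at hz
        rcases hz with rfl | rfl <;> simp_all) (by rw [card_pair hab]; omega) hcard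
    have h1R : 1 ∉ R := fun h => by have := hR2 h; simp at this
    have hmem : insert 1 R ∈ C3fam n k := by
      apply mem_union_right
      rw [mem_filter, mem_powersetCard]
      refine ⟨⟨?_, ?_⟩, mem_insert_self _ _, ?_⟩
      · apply insert_subset (by simp; omega)
        exact (hR2.trans sdiff_subset).trans (Icc_subset_Icc_left (by omega))
      · rw [card_insert_of_notMem h1R, hR3]; omega
      · intro B hB'
        rcases hB B hB' with h | h
        · exact ⟨a, mem_inter.2 ⟨mem_insert_of_mem (hR1 (by simp)), h⟩⟩
        · exact ⟨b, mem_inter.2 ⟨mem_insert_of_mem (hR1 (by simp)), h⟩⟩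
    obtain ⟨z, hz⟩ := hc _ hmem
    rw [mem_inter, mem_insert] at hz
    rcases hz.2 with rfl | h
    · exact h1 hz.1
    · exact (mem_sdiff.1 (hR2 h)).2 hz.1

lemma hit_lb (V W : Finset ℕ) (k : ℕ) (hk : 3 ≤ k) (hWV : W ⊆ V) (G 𝒬 : Finset (Finset ℕ))
    (hQ : 𝒬 ⊆ W.powersetCard 2) (hh : ∀ Q ∈ 𝒬, ∀ B ∈ G, ¬ Disjoint Q B) :
    𝒬.card * (V.card - W.card).choose (k - 3) ≤ (hitF V (k - 1) G).card := by
  rw [← card_sdiff_of_subset hWV, ← card_powersetCard, ← card_product]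
  apply card_le_card_of_injOn (fun p => p.1 ∪ p.2)
  · rintro ⟨Q, R⟩ h
    simp only [mem_coe, mem_product, mem_powersetCard] at h
    have hQ' := mem_powersetCard.1 (hQ h.1)
    have hd : Disjoint Q R := (disjoint_sdiff).mono hQ'.1 h.2.1
    simp only [mem_coe, hitF, mem_filter, mem_powersetCard]
    refine ⟨⟨union_subset (hQ'.1.trans hWV) (h.2.1.trans sdiff_subset), ?_⟩, ?_⟩
    · rw [card_union_of_disjoint hd, hQ'.2, h.2.2]; omega
    · rintro ⟨B, hB, hd⟩
      exact hh Q h.1 B hB (hd.mono_left subset_union_left)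
  · rintro ⟨Q, R⟩ h ⟨Q', R'⟩ h' e
    simp only [mem_coe, mem_product, mem_powersetCard] at h h' e
    have key : ∀ Q R : Finset ℕ, Q ⊆ W → R ⊆ V \ W → (Q ∪ R) ∩ W = Q ∧ (Q ∪ R) \ W = R := by
      intro Q R h1 h2
      constructor
      · ext z; constructor
        · intro hz
          rw [mem_inter, mem_union] at hz
          rcases hz.1 with h | h
          · exact h
          · exact absurd hz.2 (mem_sdiff.1 (h2 h)).2
        · intro hz; simp [hz, h1 hz]
      · ext z; constructor
        · intro hz
          rw [mem_sdiff, mem_union] at hz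
          rcases hz.1 with h | h
          · exact absurd (h1 h) hz.2
          · exact h
        · intro hz; simp [hz, (mem_sdiff.1 (h2 hz)).2]
    have k1 := key Q R (mem_powersetCard.1 (hQ h.1)).1 h.2.1
    have k2 := key Q' R' (mem_powersetCard.1 (hQ h'.1)).1 h'.2.1
    rw [Prod.mk.injEq]
    exact ⟨by rw [← k1.1, e, k2.1], by rw [← k1.2, e, k2.2]⟩

lemma rect_card (k : ℕ) (X Y : Finset ℕ) (hX : X ⊆ Icc 2 (k + 1)) (hY : Y ⊆ Icc (k + 2) (2 * k)) :
    ((X ×ˢ Y).image (fun p => ({p.1, p.2} : Finset ℕ))).card = X.card * Y.card := by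
  rw [card_image_of_injOn, card_product]
  rintro ⟨a, b⟩ h ⟨c, d⟩ h' e
  simp only [mem_coe, mem_product] at h h' e
  have h1 := hX h.1
  have h2 := hY h.2
  have h3 := hX h'.1
  have h4 := hY h'.2
  simp only [mem_Icc] at h1 h2 h3 h4
  have e1 : a ∈ ({c, d} : Finset ℕ) := by rw [← e]; simp
  have e2 : b ∈ ({c, d} : Finset ℕ) := by rw [← e]; simp
  simp only [mem_insert, mem_singleton] at e1 e2
  rw [Prod.mk.injEq]; omega

lemma rect_sub (k : ℕ) (X Y : Finset ℕ) (hX : X ⊆ Icc 2 (k + 1)) (hY : Y ⊆ Icc (k + 2) (2 * k)) :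
    ((X ×ˢ Y).image (fun p => ({p.1, p.2} : Finset ℕ))) ⊆ (X ∪ Y).powersetCard 2 := by
  intro Q hQ
  obtain ⟨⟨a, b⟩, h, rfl⟩ := mem_image.1 hQ
  rw [mem_product] at h
  have h1 := hX h.1
  have h2 := hY h.2
  simp only [mem_Icc] at h1 h2
  rw [mem_powersetCard]
  refine ⟨?_, card_pair (by omega)⟩
  intro z hz
  simp only [mem_insert, mem_singleton] at hz
  rcases hz with rfl | rfl
  · exact mem_union_left _ h.1
  · exact mem_union_right _ h.2

lemma rect_hit (k : ℕ) (X Y : Finset ℕ) (hX : X ⊆ Icc 2 (k + 1)) (hY : Y ⊆ Icc (k + 2) (2 * k)) :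
    ∀ Q ∈ ((X ×ˢ Y).image (fun p => ({p.1, p.2} : Finset ℕ))), ∀ B ∈ T2fam k, ¬ Disjoint Q B := by
  intro Q hQ B hB hd
  obtain ⟨⟨a, b⟩, h, rfl⟩ := mem_image.1 hQ
  rw [mem_product] at h
  rcases T2_pair k a b (hX h.1) (hY h.2) B hB with h | h
  · exact disjoint_left.1 hd (by simp) h
  · exact disjoint_left.1 hd (by simp) h

/-- first lower bound for `|C_3|` -/
lemma D_lb1 (n k : ℕ) (hk : 3 ≤ k) (hn : 2 * k ≤ n) :
    (k * (k - 1) + 1) * (n - 2 * k).choose (k - 3) + 3 ≤ (C3fam n k).card := by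
  refine le_trans ?_ (hit_le_D n k hk hn)
  apply Nat.add_le_add_right
  have hc := rect_card k (Icc 2 (k + 1)) (Icc (k + 2) (2 * k)) le_rfl le_rfl
  have hu : Icc 2 (k + 1) ∪ Icc (k + 2) (2 * k) = Icc 2 (2 * k) := by
    ext z; simp only [mem_union, mem_Icc]; omega
  have hs := rect_sub k (Icc 2 (k + 1)) (Icc (k + 2) (2 * k)) le_rfl le_rfl
  rw [hu] at hs
  have hh := rect_hit k (Icc 2 (k + 1)) (Icc (k + 2) (2 * k)) le_rfl le_rfl
  set 𝒬 := ((Icc 2 (k + 1) ×ˢ Icc (k + 2) (2 * k)).image (fun p => ({p.1, p.2} : Finset ℕ))) with h𝒬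
  have hn23 : ({2, 3} : Finset ℕ) ∉ 𝒬 := by
    intro h
    obtain ⟨⟨a, b⟩, h, e⟩ := mem_image.1 h
    rw [mem_product] at h
    have h2 : b ∈ ({2, 3} : Finset ℕ) := by rw [← e]; simp
    simp at h2 h; omega
  have := hit_lb (Icc 2 n) (Icc 2 (2 * k)) k hk (Icc_subset_Icc_right hn) (T2fam k)
    (insert {2, 3} 𝒬) (by
      apply insert_subset _ hs
      rw [mem_powersetCard]
      refine ⟨?_, card_pair (by omega)⟩
      intro z hz; simp at hz ⊢; omega) (by
      intro Q hQ B hB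
      rcases mem_insert.1 hQ with rfl | hQ
      · rw [not_disjoint_iff]
        rcases mem_T2.1 hB with rfl | rfl | rfl
        · exact ⟨2, by simp, by simp; omega⟩
        · exact ⟨2, by simp, by simp⟩
        · exact ⟨3, by simp, by simp⟩
      · exact hh Q hQ B hB)
  rw [card_insert_of_notMem hn23, hc] at this
  simp only [Nat.card_Icc] at this
  have e1 : n + 1 - 2 - (2 * k + 1 - 2) = n - 2 * k := by omega
  have e2 : k + 1 + 1 - 2 = k := by omega
  have e3 : 2 * k + 1 - (k + 2) = k - 1 := by omega
  rw [e1, e2, e3] at this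
  exact this

/-- second lower bound for `|C_3|` -/
lemma D_lb2 (n k u : ℕ) (hk : 3 ≤ k) (hn : 2 * k ≤ n) (hu : u ≤ k - 1) :
    (u * u) * (n - 1 - 2 * u).choose (k - 3) + 3 ≤ (C3fam n k).card := by
  refine le_trans ?_ (hit_le_D n k hk hn)
  apply Nat.add_le_add_right
  have hX : Icc 2 (u + 1) ⊆ Icc 2 (k + 1) := Icc_subset_Icc_right (by omega)
  have hY : Icc (k + 2) (k + 1 + u) ⊆ Icc (k + 2) (2 * k) := Icc_subset_Icc_right (by omega)
  have := hit_lb (Icc 2 n) _ k hk (by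
      apply union_subset
      · exact Icc_subset_Icc_right (by omega)
      · exact Icc_subset_Icc (by omega) (by omega)) (T2fam k) _ (rect_sub k _ _ hX hY)
    (rect_hit k _ _ hX hY)
  rw [rect_card k _ _ hX hY, card_union_of_disjoint (by
    rw [disjoint_left]; intro z; simp only [mem_Icc]; omega)] at this
  simp only [Nat.card_Icc] at this
  have e1 : n + 1 - 2 - (u + 1 + 1 - 2 + (k + 1 + u + 1 - (k + 2))) = n - 1 - 2 * u := by omega
  have e2 : u + 1 + 1 - 2 = u := by omega
  have e3 : k + 1 + u + 1 - (k + 2) = u := by omega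
  rw [e1, e2, e3] at this
  exact this

/-- exact value (upper bound on the loss of `T2fam`) -/
lemma T2_loss (q j : ℕ) :
    (missF (Icc 2 (q + 2 * j + 6)) (j + 2) (T2fam (j + 3))).card + q.choose (j + 2) ≤
      2 * (q + j + 2).choose (j + 2) + (q + j + 1).choose (j + 1) := by
  set V := Icc 2 (q + 2 * j + 6) with hV
  have hVc : V.card = q + 2 * j + 5 := by simp [hV]
  have hsubV : ∀ {B : Finset ℕ}, B ∈ T2fam (j + 3) → B ⊆ V := fun hB =>
    T2_sub (j + 3) _ (by omega) (by omega) hB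
  set A := Icc 2 (j + 3 + 1) with hA
  set I := Icc (j + 3 + 2) (2 * (j + 3)) with hI
  have hAm : A ∈ T2fam (j + 3) := mem_T2.2 (Or.inl rfl)
  have hBm : insert 2 I ∈ T2fam (j + 3) := mem_T2.2 (Or.inr (Or.inl rfl))
  have hCm : insert 3 I ∈ T2fam (j + 3) := mem_T2.2 (Or.inr (Or.inr rfl))
  have hAI : A ∪ insert 2 I = Icc 2 (2 * (j + 3)) := by
    ext z; simp only [hA, hI, mem_union, mem_insert, mem_Icc]; omega
  let PA := (V \ A).powersetCard (j + 2)
  let PB := (V \ insert 2 I).powersetCard (j + 2)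
  let PC := ((V \ (insert 2 (insert 3 I))).powersetCard (j + 1)).image (fun R => insert 2 R)
  have hsub : missF V (j + 2) (T2fam (j + 3)) ⊆ (PA ∪ PB) ∪ PC := by
    intro S hS
    rw [missF, mem_filter, mem_powersetCard] at hS
    obtain ⟨⟨h1, h2⟩, B, hB, hd⟩ := hS
    rcases mem_T2.1 hB with rfl | rfl | rfl
    · exact mem_union_left _ (mem_union_left _ (mem_powersetCard.2 ⟨subset_sdiff.2 ⟨h1, hd⟩, h2⟩))
    · exact mem_union_left _ (mem_union_right _ (mem_powersetCard.2 ⟨subset_sdiff.2 ⟨h1, hd⟩, h2⟩))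
    · by_cases h : 2 ∈ S
      · apply mem_union_right
        refine mem_image.2 ⟨S.erase 2, mem_powersetCard.2 ⟨subset_sdiff.2 ⟨?_, ?_⟩, ?_⟩,
          insert_erase h⟩
        · exact (erase_subset _ _).trans h1
        · rw [disjoint_insert_right]
          exact ⟨notMem_erase _ _, hd.mono_left (erase_subset _ _)⟩
        · rw [card_erase_of_mem h, h2]; omega
      · apply mem_union_left; apply mem_union_right
        refine mem_powersetCard.2 ⟨subset_sdiff.2 ⟨h1, ?_⟩, h2⟩
        rw [disjoint_insert_right] at hd ⊢
        exact ⟨h, hd.2⟩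
  have h1 := card_le_card hsub
  have h2 := card_union_le (PA ∪ PB) PC
  have h3 := card_union_add_card_inter PA PB
  have h4 : PA.card = (q + j + 2).choose (j + 2) := by
    simp only [PA]
    rw [card_powersetCard, card_sdiff_of_subset (hsubV hAm), hVc, T2_unif _ (by omega) hAm]
    congr 1; omega
  have h5 : PB.card = (q + j + 2).choose (j + 2) := by
    simp only [PB]
    rw [card_powersetCard, card_sdiff_of_subset (hsubV hBm), hVc, T2_unif _ (by omega) hBm]
    congr 1; omega
  have h6 : PC.card ≤ (q + j + 1).choose (j + 1) := by
    refine card_image_le.trans ?_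
    rw [card_powersetCard, card_sdiff_of_subset (insert_subset (by simp [hV]) (hsubV hCm)), hVc,
      card_insert_of_notMem (by simp [hI]), T2_unif _ (by omega) hCm]
    apply le_of_eq; congr 1; omega
  have h7 : (PA ∩ PB).card = q.choose (j + 2) := by
    have : PA ∩ PB = (V \ (A ∪ insert 2 I)).powersetCard (j + 2) := by
      ext S
      simp only [PA, PB, mem_inter, mem_powersetCard, subset_sdiff, disjoint_union_right]
      constructor
      · rintro ⟨⟨⟨a, b⟩, c⟩, ⟨⟨_, d⟩, _⟩⟩; exact ⟨⟨a, b, d⟩, c⟩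
      · rintro ⟨⟨a, b, d⟩, c⟩; exact ⟨⟨⟨a, b⟩, c⟩, ⟨⟨a, d⟩, c⟩⟩
    rw [this, card_powersetCard, hAI, card_sdiff_of_subset (Icc_subset_Icc_right (by omega)), hVc]
    simp only [Nat.card_Icc]
    congr 1; omega
  omega

/-- third lower bound -/
lemma D_lb3 (q j : ℕ) :
    (q + 2 * j + 5).choose (j + 2) + q.choose (j + 2) + 3 ≤ (C3fam (q + 2 * j + 6) (j + 3)).card +
      (2 * (q + j + 2).choose (j + 2) + (q + j + 1).choose (j + 1)) := by
  have h1 := T2_loss q j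
  have h2 := hit_le_D (q + 2 * j + 6) (j + 3) (by omega) (by omega)
  have h3 := hit_add_miss (Icc 2 (q + 2 * j + 6)) (j + 2) (T2fam (j + 3))
  simp only [Nat.card_Icc] at h3
  have e1 : j + 3 - 1 = j + 2 := by omega
  have e2 : q + 2 * j + 6 + 1 - 2 = q + 2 * j + 5 := by omega
  rw [e1] at h2
  rw [e2] at h3
  omega

lemma Fx_add_Gx (F : Finset (Finset ℕ)) (x : ℕ) : (Fx F x).card + (Gx F x).card = F.card := by
  rw [Fx, Gx, card_filter_add_card_filter_not]

lemma star_bound (n k x : ℕ) (hk : 1 ≤ k) (F : Finset (Finset ℕ)) (hF : Good n k F)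
    (hx : x ∈ Icc 1 n) :
    (Fx F x).card + (missF ((Icc 1 n).erase x) (k - 1) (Gx F x)).card ≤ (n - 1).choose (k - 1) := by
  have h := hit_add_miss ((Icc 1 n).erase x) (k - 1) (Gx F x)
  rw [card_erase_of_mem hx, Nat.card_Icc, Nat.add_sub_cancel] at h
  suffices hs : (Fx F x).card ≤ (hitF ((Icc 1 n).erase x) (k - 1) (Gx F x)).card by omega
  apply card_le_card_of_injOn (fun A => A.erase x)
  · intro A hA
    simp only [mem_coe, Fx, mem_filter] at hA
    have hA' := mem_powersetCard.1 (hF.1 hA.1)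
    simp only [mem_coe, hitF, mem_filter, mem_powersetCard]
    refine ⟨⟨erase_subset_erase _ hA'.1, by rw [card_erase_of_mem hA.2, hA'.2]⟩, ?_⟩
    rintro ⟨B, hB, hd⟩
    rw [Gx, mem_filter] at hB
    obtain ⟨z, hz⟩ := hF.2.1 A hA.1 B hB.1
    rw [mem_inter] at hz
    exact disjoint_left.1 hd (mem_erase.2 ⟨fun e => hB.2 (e ▸ hz.2), hz.1⟩) hz.2
  · intro A hA B hB h
    simp only [mem_coe, Fx, mem_filter] at hA hB
    simp only at h
    rw [← insert_erase hA.2, h, insert_erase hB.2]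

lemma Gx_sub (n k x : ℕ) (F : Finset (Finset ℕ)) (hF : Good n k F) :
    ∀ B ∈ Gx F x, B ⊆ (Icc 1 n).erase x := by
  intro B hB
  rw [Gx, mem_filter] at hB
  exact subset_erase.2 ⟨(mem_powersetCard.1 (hF.1 hB.1)).1, hB.2⟩

lemma Gx_card (n k x : ℕ) (F : Finset (Finset ℕ)) (hF : Good n k F) :
    ∀ B ∈ Gx F x, B.card = k := by
  intro B hB
  rw [Gx, mem_filter] at hB
  exact (mem_powersetCard.1 (hF.1 hB.1)).2

lemma Gx_avoid (n k x : ℕ) (F : Finset (Finset ℕ)) (hF : Good n k F) (y : ℕ) :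
    ∃ B ∈ Gx F x, y ∉ B := by
  obtain ⟨B, hB, hd⟩ := hF.2.2 {x, y} card_le_two
  exact ⟨B, mem_filter.2 ⟨hB, fun h => disjoint_left.1 hd h (by simp)⟩,
    fun h => disjoint_left.1 hd h (by simp)⟩

lemma part2 (n k x : ℕ) (hk : 4 ≤ k) (hn : 2 * k ≤ n) (F : Finset (Finset ℕ)) (hF : Good n k F)
    (hx : x ∈ Icc 1 n) (hG : (Gx F x).card ≤ (n - 2 * k).choose (k - 3) + 3) :
    F.card ≤ (C3fam n k).card := by
  obtain ⟨j, rfl⟩ : ∃ j, k = j + 3 := ⟨k - 3, by omega⟩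
  obtain ⟨q, rfl⟩ : ∃ q, n = q + 2 * j + 6 := ⟨n - 2 * j - 6, by omega⟩
  have h1 := star_bound _ _ x (by omega) F hF hx
  have h2 := Fx_add_Gx F x
  have h3 := D_lb3 q j
  have e1 : q + 2 * j + 6 - 2 * (j + 3) = q := by omega
  have e2 : j + 3 - 3 = j := by omega
  have e3 : j + 3 - 1 = j + 2 := by omega
  have e4 : q + 2 * j + 6 - 1 = q + 2 * j + 5 := by omega
  rw [e1, e2] at hG
  rw [e3, e4] at h1
  have hV : ((Icc 1 (q + 2 * j + 6)).erase x).card = q + 2 * j + 5 := by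
    rw [card_erase_of_mem hx, Nat.card_Icc]; omega
  have hInt : ∀ A ∈ Gx F x, ∀ B ∈ Gx F x, (A ∩ B).Nonempty := fun A hA B hB =>
    hF.2.1 A (mem_filter.1 hA).1 B (mem_filter.1 hB).1
  by_cases h4 : 4 ≤ (Gx F x).card
  · have := lossC _ (Gx F x) q j (by omega) hV (Gx_sub _ _ x F hF) (Gx_card _ _ x F hF)
      (fun y _ => Gx_avoid _ _ x F hF y) hInt h4
    omega
  · have := lossA _ (Gx F x) q j hV (Gx_sub _ _ x F hF) (Gx_card _ _ x F hF)
      (fun y _ => Gx_avoid _ _ x F hF y) hInt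
    omega

lemma graph_half (P Q : Finset (Finset ℕ)) (k : ℕ) (hk : 4 ≤ k) (hP2 : ∀ e ∈ P, e.card = 2)
    (hQ2 : ∀ e ∈ Q, e.card = 2) (hx : ∀ e ∈ P, ∀ f ∈ Q, (e ∩ f).Nonempty)
    (hPd : ∀ y, (P.filter (fun e => y ∈ e)).card ≤ k)
    (hQd : ∀ y, (Q.filter (fun e => y ∈ e)).card ≤ k) (hP : 2 ≤ P.card)
    (hInt : ∀ e ∈ P, ∀ f ∈ P, (e ∩ f).Nonempty) : P.card + Q.card ≤ 2 * k := by
  by_cases h4 : 4 ≤ P.card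
  · obtain ⟨y, hy⟩ := star_or_small P hP2 hInt h4
    have hQy : ∀ f ∈ Q, y ∈ f := by
      intro f hf
      by_contra hyf
      have hsub : P ⊆ f.image (fun s => ({y, s} : Finset ℕ)) := by
        intro e he
        obtain ⟨s, hs⟩ := hx e he f hf
        rw [mem_inter] at hs
        refine mem_image.2 ⟨s, hs.2, ?_⟩
        exact (eq_two (hP2 e he) (hy e he) hs.1 (fun h => hyf (h ▸ hs.2))).symm
      have := (card_le_card hsub).trans card_image_le
      rw [hQ2 f hf] at this
      omega
    have h1 := hPd y
    have h2 := hQd y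
    rw [filter_true_of_mem hy] at h1
    rw [filter_true_of_mem hQy] at h2
    omega
  · obtain ⟨e, he, e', he', hne⟩ := one_lt_card.1 (show 1 < P.card by omega)
    obtain ⟨y, hy⟩ := hInt e he e' he'
    rw [mem_inter] at hy
    have hsub : Q ⊆ insert ((e ∪ e').erase y) (Q.filter (fun f => y ∈ f)) := by
      intro f hf
      by_cases hyf : y ∈ f
      · exact mem_insert_of_mem (mem_filter.2 ⟨hf, hyf⟩)
      · obtain ⟨s, hs⟩ := hx e he f hf
        obtain ⟨t, ht⟩ := hx e' he' f hf
        rw [mem_inter] at hs ht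
        have hys : y ≠ s := fun h => hyf (h ▸ hs.2)
        have hyt : y ≠ t := fun h => hyf (h ▸ ht.2)
        have e1 := eq_two (hP2 e he) hy.1 hs.1 hys
        have e2 := eq_two (hP2 e' he') hy.2 ht.1 hyt
        have hst : s ≠ t := by rintro rfl; exact hne (e1.trans e2.symm)
        have e3 := eq_two (hQ2 f hf) hs.2 ht.2 hst
        rw [mem_insert]; left
        rw [e3, e1, e2]
        ext z
        simp only [mem_insert, mem_singleton, mem_erase, mem_union]
        omega
    have h1 := card_le_card hsub
    have h2 := card_insert_le ((e ∪ e').erase y) (Q.filter (fun f => y ∈ f))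
    have h3 := hQd y
    omega

lemma graph_four (P Q : Finset (Finset ℕ)) (hQ2 : ∀ e ∈ Q, e.card = 2)
    (hP2 : ∀ e ∈ P, e.card = 2)
    (hx : ∀ e ∈ P, ∀ f ∈ Q, (e ∩ f).Nonempty)
    (hInt : ¬ ∀ e ∈ P, ∀ f ∈ P, (e ∩ f).Nonempty) : Q.card ≤ 4 := by
  push Not at hInt
  obtain ⟨e, he, e', he', hd⟩ := hInt
  have hsub : Q ⊆ (e ×ˢ e').image (fun p => ({p.1, p.2} : Finset ℕ)) := by
    intro f hf
    obtain ⟨s, hs⟩ := hx e he f hf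
    obtain ⟨t, ht⟩ := hx e' he' f hf
    rw [mem_inter] at hs ht
    have hst : s ≠ t := by
      rintro rfl
      have : s ∈ e ∩ e' := mem_inter.2 ⟨hs.1, ht.1⟩
      rw [hd] at this; simp at this
    exact mem_image.2 ⟨(s, t), mem_product.2 ⟨hs.1, ht.1⟩, (eq_two (hQ2 f hf) hs.2 ht.2 hst).symm⟩
  have := (card_le_card hsub).trans card_image_le
  rw [card_product, hP2 e he, hP2 e' he'] at this
  omega

lemma graph_bound (P Q : Finset (Finset ℕ)) (k : ℕ) (hk : 4 ≤ k) (hP2 : ∀ e ∈ P, e.card = 2)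
    (hQ2 : ∀ e ∈ Q, e.card = 2) (hx : ∀ e ∈ P, ∀ f ∈ Q, (e ∩ f).Nonempty)
    (hPd : ∀ y, (P.filter (fun e => y ∈ e)).card ≤ k)
    (hQd : ∀ y, (Q.filter (fun e => y ∈ e)).card ≤ k) (hP : 2 ≤ P.card) (hQ : 2 ≤ Q.card) :
    P.card + Q.card ≤ 2 * k := by
  have hx' : ∀ e ∈ Q, ∀ f ∈ P, (e ∩ f).Nonempty := fun e he f hf => by
    rw [inter_comm]; exact hx f hf e he
  by_cases h1 : ∀ e ∈ P, ∀ f ∈ P, (e ∩ f).Nonempty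
  · exact graph_half P Q k hk hP2 hQ2 hx hPd hQd hP h1
  by_cases h2 : ∀ e ∈ Q, ∀ f ∈ Q, (e ∩ f).Nonempty
  · rw [add_comm]
    exact graph_half Q P k hk hQ2 hP2 hx' hQd hPd hQ h2
  have := graph_four P Q hQ2 hP2 hx h1
  have := graph_four Q P hP2 hQ2 hx' h2
  omega

section triples
variable (𝒯 : Finset (Finset ℕ)) (k : ℕ)

lemma codeg_sub (h3 : ∀ T ∈ 𝒯, T.card = 3) (p q : ℕ) (hpq : p ≠ q) (B : Finset ℕ)
    (hd : Disjoint B {p, q}) (hB : ∀ T ∈ 𝒯, (T ∩ B).Nonempty) :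
    𝒯.filter (fun T => p ∈ T ∧ q ∈ T) ⊆ B.image (fun z => ({p, q, z} : Finset ℕ)) := by
  intro T hT
  rw [mem_filter] at hT
  obtain ⟨z, hz⟩ := hB T hT.1
  rw [mem_inter] at hz
  have hzp : p ≠ z := by rintro rfl; exact disjoint_left.1 hd hz.2 (by simp)
  have hzq : q ≠ z := by rintro rfl; exact disjoint_left.1 hd hz.2 (by simp)
  exact mem_image.2 ⟨z, hz.2, (eq_three (h3 T hT.1) hT.2.1 hT.2.2 hz.1 hpq hzp hzq).symm⟩

lemma codeg_le (h3 : ∀ T ∈ 𝒯, T.card = 3)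
    (hB : ∀ S : Finset ℕ, S.card ≤ 2 →
      ∃ B : Finset ℕ, B.card ≤ k ∧ Disjoint B S ∧ ∀ T ∈ 𝒯, (T ∩ B).Nonempty)
    (p q : ℕ) (hpq : p ≠ q) : (𝒯.filter (fun T => p ∈ T ∧ q ∈ T)).card ≤ k := by
  obtain ⟨B, hBk, hd, hBT⟩ := hB {p, q} card_le_two
  exact ((card_le_card (codeg_sub 𝒯 h3 p q hpq B hd hBT)).trans card_image_le).trans hBk

lemma deg_le (hk : 4 ≤ k) (h3 : ∀ T ∈ 𝒯, T.card = 3) (hInt : isInt 𝒯)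
    (havoid : ∀ x, ∃ T ∈ 𝒯, x ∉ T)
    (hB : ∀ S : Finset ℕ, S.card ≤ 2 →
      ∃ B : Finset ℕ, B.card ≤ k ∧ Disjoint B S ∧ ∀ T ∈ 𝒯, (T ∩ B).Nonempty)
    (p : ℕ) : (𝒯.filter (fun T => p ∈ T)).card + 1 ≤ 3 * k := by
  obtain ⟨T0, hT0, hpT⟩ := havoid p
  obtain ⟨q, c, d, hqc, hqd, hcd, rfl⟩ := card_eq_three.1 (h3 T0 hT0)
  simp only [mem_insert, mem_singleton, not_or] at hpT
  set Nq := 𝒯.filter (fun T => p ∈ T ∧ q ∈ T) with hNq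
  set Nc := 𝒯.filter (fun T => p ∈ T ∧ c ∈ T) with hNc
  set Nd := 𝒯.filter (fun T => p ∈ T ∧ d ∈ T) with hNd
  have hsub : 𝒯.filter (fun T => p ∈ T) ⊆ Nq ∪ (Nc ∪ Nd) := by
    intro T hT
    rw [mem_filter] at hT
    obtain ⟨z, hz⟩ := hInt T hT.1 _ hT0
    simp only [mem_inter, mem_insert, mem_singleton] at hz
    rcases hz with ⟨hz, rfl | rfl | rfl⟩
    · exact mem_union_left _ (mem_filter.2 ⟨hT.1, hT.2, hz⟩)
    · exact mem_union_right _ (mem_union_left _ (mem_filter.2 ⟨hT.1, hT.2, hz⟩))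
    · exact mem_union_right _ (mem_union_right _ (mem_filter.2 ⟨hT.1, hT.2, hz⟩))
  have h0 := card_le_card hsub
  have kq := codeg_le 𝒯 k h3 hB p q hpT.1
  have kc := codeg_le 𝒯 k h3 hB p c hpT.2.1
  have kd := codeg_le 𝒯 k h3 hB p d hpT.2.2
  rw [← hNq] at kq
  rw [← hNc] at kc
  rw [← hNd] at kd
  have u2 := card_union_le Nc Nd
  by_cases hq : Nq.card < k
  · have u1 := card_union_le Nq (Nc ∪ Nd)
    omega
  · obtain ⟨B, hBk, hd, hBT⟩ := hB {p, q} card_le_two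
    have hs := codeg_sub 𝒯 h3 p q hpT.1 B hd hBT
    rw [← hNq] at hs
    have heq := eq_of_subset_of_card_le hs (card_image_le.trans (by omega))
    have hi : (Nq ∩ (Nc ∪ Nd)).Nonempty := by
      obtain ⟨z, hz⟩ := hBT _ hT0
      rw [mem_inter] at hz
      have hzN : ({p, q, z} : Finset ℕ) ∈ Nq := by
        rw [heq]; exact mem_image_of_mem _ hz.2
      refine ⟨{p, q, z}, mem_inter.2 ⟨hzN, ?_⟩⟩
      have hzT := (mem_filter.1 hzN).1
      simp only [mem_insert, mem_singleton] at hz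
      rcases hz with ⟨rfl | rfl | rfl, hzB⟩
      · exact absurd (by simp) (disjoint_left.1 hd hzB)
      · exact mem_union_left _ (mem_filter.2 ⟨hzT, by simp, by simp⟩)
      · exact mem_union_right _ (mem_filter.2 ⟨hzT, by simp, by simp⟩)
    have u1 := card_union_add_card_inter Nq (Nc ∪ Nd)
    have := card_pos.2 hi
    omega

lemma triples_bound (hk : 4 ≤ k) (h3 : ∀ T ∈ 𝒯, T.card = 3) (hInt : isInt 𝒯)
    (havoid : ∀ x, ∃ T ∈ 𝒯, x ∉ T)
    (hB : ∀ S : Finset ℕ, S.card ≤ 2 →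
      ∃ B : Finset ℕ, B.card ≤ k ∧ Disjoint B S ∧ ∀ T ∈ 𝒯, (T ∩ B).Nonempty) :
    𝒯.card ≤ 3 * k := by
  by_cases ht : tau3 𝒯
  · have := k3_thm 𝒯 h3 hInt ht
    omega
  unfold tau3 at ht
  push Not at ht
  obtain ⟨S, hS, hSc⟩ := ht
  have hS2 : S.card = 2 := by
    by_contra hne
    obtain ⟨y, hy⟩ := card_le_one_iff_subset_singleton.1 (show S.card ≤ 1 by omega)
    obtain ⟨T, hT, hyT⟩ := havoid y
    apply hSc T hT
    exact (disjoint_singleton_right.2 hyT).mono_right hy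
  obtain ⟨p, q, hpq, rfl⟩ := card_eq_two.1 hS2
  have hcov : ∀ T ∈ 𝒯, p ∈ T ∨ q ∈ T := by
    intro T hT
    by_contra hcon
    push Not at hcon
    apply hSc T hT
    simp [hcon.1, hcon.2]
  have dp := deg_le 𝒯 k hk h3 hInt havoid hB p
  have dq := deg_le 𝒯 k hk h3 hInt havoid hB q
  have dpq := codeg_le 𝒯 k h3 hB p q hpq
  set P := 𝒯.filter (fun T => p ∈ T ∧ q ∉ T) with hP
  set Q := 𝒯.filter (fun T => q ∈ T ∧ p ∉ T) with hQ
  have ep : P.card + (𝒯.filter (fun T => p ∈ T ∧ q ∈ T)).card = (𝒯.filter (fun T => p ∈ T)).card := by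
    have := card_filter_add_card_filter_not (s := 𝒯.filter (fun T => p ∈ T)) (fun T => q ∈ T)
    have e0 : (𝒯.filter (fun T => p ∈ T)).filter (fun T => q ∉ T) = P := by
      ext T; simp only [hP, mem_filter, and_assoc]
    rw [e0, filter_filter] at this
    omega
  have eq : Q.card + (𝒯.filter (fun T => p ∈ T ∧ q ∈ T)).card = (𝒯.filter (fun T => q ∈ T)).card := by
    have := card_filter_add_card_filter_not (s := 𝒯.filter (fun T => q ∈ T)) (fun T => p ∈ T)
    have e0 : (𝒯.filter (fun T => q ∈ T)).filter (fun T => p ∉ T) = Q := by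
      ext T; simp only [hQ, mem_filter, and_assoc]
    rw [e0, filter_filter] at this
    have e : 𝒯.filter (fun T => q ∈ T ∧ p ∈ T) = 𝒯.filter (fun T => p ∈ T ∧ q ∈ T) := by
      apply filter_congr; intro T _; exact and_comm
    rw [e] at this
    omega
  have et : 𝒯.card = (𝒯.filter (fun T => p ∈ T)).card + Q.card := by
    have := card_filter_add_card_filter_not (s := 𝒯) (fun T => p ∈ T)
    have e : 𝒯.filter (fun T => p ∉ T) = Q := by
      apply filter_congr; intro T hT
      constructor
      · intro h; exact ⟨(hcov T hT).resolve_left h, h⟩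
      · exact fun h => h.2
    rw [e] at this
    omega
  by_cases hP2 : P.card ≤ 1
  · omega
  by_cases hQ2 : Q.card ≤ 1
  · omega
  have injP : Set.InjOn (fun T : Finset ℕ => T.erase p) P := by
    intro A hA B hB h
    have hA := (mem_filter.1 (mem_coe.1 hA)).2.1
    have hB := (mem_filter.1 (mem_coe.1 hB)).2.1
    simp only at h
    rw [← insert_erase hA, h, insert_erase hB]
  have injQ : Set.InjOn (fun T : Finset ℕ => T.erase q) Q := by
    intro A hA B hB h
    have hA := (mem_filter.1 (mem_coe.1 hA)).2.1
    have hB := (mem_filter.1 (mem_coe.1 hB)).2.1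
    simp only at h
    rw [← insert_erase hA, h, insert_erase hB]
  have degaux : ∀ (R : Finset (Finset ℕ)) (r y : ℕ), R ⊆ 𝒯 → (∀ T ∈ R, r ∈ T) →
      ((R.image (fun T => T.erase r)).filter (fun e => y ∈ e)).card ≤ k := by
    intro R r y hR hr
    by_cases hry : r = y
    · subst hry
      rw [filter_false_of_mem]
      · simp
      · intro e he
        obtain ⟨T, _, rfl⟩ := mem_image.1 he
        simp
    · refine le_trans ?_ (codeg_le 𝒯 k h3 hB r y hry)
      have : (R.image (fun T => T.erase r)).filter (fun e => y ∈ e) ⊆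
          (𝒯.filter (fun T => r ∈ T ∧ y ∈ T)).image (fun T => T.erase r) := by
        intro e he
        obtain ⟨he, hy⟩ := mem_filter.1 he
        obtain ⟨T, hT, rfl⟩ := mem_image.1 he
        exact mem_image_of_mem _ (mem_filter.2 ⟨hR hT, hr T hT, mem_of_mem_erase hy⟩)
      exact (card_le_card this).trans card_image_le
  have hb := graph_bound (P.image (fun T => T.erase p)) (Q.image (fun T => T.erase q)) k hk
    (by
      intro e he
      obtain ⟨T, hT, rfl⟩ := mem_image.1 he
      rw [hP, mem_filter] at hT
      rw [card_erase_of_mem hT.2.1, h3 T hT.1])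
    (by
      intro e he
      obtain ⟨T, hT, rfl⟩ := mem_image.1 he
      rw [hQ, mem_filter] at hT
      rw [card_erase_of_mem hT.2.1, h3 T hT.1])
    (by
      intro e he f hf
      obtain ⟨T, hT, rfl⟩ := mem_image.1 he
      obtain ⟨T', hT', rfl⟩ := mem_image.1 hf
      rw [hP, mem_filter] at hT
      rw [hQ, mem_filter] at hT'
      obtain ⟨z, hz⟩ := hInt T hT.1 T' hT'.1
      rw [mem_inter] at hz
      exact ⟨z, mem_inter.2 ⟨mem_erase.2 ⟨fun h => hT'.2.2 (h ▸ hz.2), hz.1⟩,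
        mem_erase.2 ⟨fun h => hT.2.2 (h ▸ hz.1), hz.2⟩⟩⟩)
    (fun y => degaux P p y (filter_subset _ _) (fun T hT => (mem_filter.1 hT).2.1))
    (fun y => degaux Q q y (filter_subset _ _) (fun T hT => (mem_filter.1 hT).2.1))
    (by rw [card_image_of_injOn injP]; omega) (by rw [card_image_of_injOn injQ]; omega)
  rw [card_image_of_injOn injP, card_image_of_injOn injQ] at hb
  omega
end triples

lemma choose_drop (a r : ℕ) : ∀ t, (a + 1).choose (r + 1) ≤ (a + 1 - t).choose (r + 1) + t * a.choose r := by
  intro t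
  induction t with
  | zero => simp
  | succ t ih =>
    have h : (a + 1 - t).choose (r + 1) ≤ (a + 1 - (t + 1)).choose (r + 1) + a.choose r := by
      by_cases ht : t ≤ a
      · have e : a + 1 - t = (a - t) + 1 := by omega
        have e' : a + 1 - (t + 1) = a - t := by omega
        rw [e, e', Nat.choose_succ_succ']
        have := Nat.choose_le_choose r (show a - t ≤ a by omega)
        omega
      · have e : a + 1 - t = 0 := by omega
        rw [e]; simp
    rw [Nat.succ_mul]; omega

lemma rest_bound (n k : ℕ) (hk : 4 ≤ k) (F : Finset (Finset ℕ)) (hF : Good n k F) :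
    ∃ 𝒯 : Finset (Finset ℕ), (∀ T ∈ 𝒯, T.card = 3 ∧ T ⊆ Icc 1 n ∧ isCov F T) ∧ isInt 𝒯 ∧
      (F.filter (fun A => ∀ T ∈ 𝒯, ¬ T ⊆ A)).card ≤ (k ^ 4 + 3 * k ^ 3) * (n - 4).choose (k - 4) := by
  classical
  set c4 := (n - 4).choose (k - 4) with hc4
  have hU : (Icc 1 n).card = n := by simp
  set 𝒯 := ((Icc 1 n).powersetCard 3).filter (fun T => isCov F T) with h𝒯
  set 𝒯' := 𝒯.filter (fun T => 3 * c4 < (F.filter (fun A => T ⊆ A)).card) with h𝒯'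
  have hm : ∀ T ∈ 𝒯, T.card = 3 ∧ T ⊆ Icc 1 n ∧ isCov F T := by
    intro T hT
    rw [h𝒯, mem_filter, mem_powersetCard] at hT
    exact ⟨hT.1.2, hT.1.1, hT.2⟩
  have hTc : 𝒯.card ≤ k ^ 3 := by
    have := branching (Icc 1 n) 𝒯 n 3 k 2 hU (filter_subset _ _) ∅ (by
      intro S _ hS _
      obtain ⟨B, hB, hd⟩ := hF.2.2 S hS
      refine ⟨B, (mem_powersetCard.1 (hF.1 hB)).2.le, hd, fun A hA _ => ?_⟩
      rw [inter_comm]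
      exact (hm A hA).2.2 B hB) 3 ∅ le_rfl (by simp)
    simpa using this
  set F0 := F.filter (fun A => ∀ T ∈ 𝒯, ¬ T ⊆ A) with hF0
  have hF0c : F0.card ≤ k ^ 4 * c4 := by
    have := branching (Icc 1 n) F0 n k k 3 hU ((filter_subset _ _).trans hF.1) ∅ (by
      intro S _ hS hex
      obtain ⟨A0, hA0, hSA⟩ := hex
      rw [hF0, mem_filter] at hA0
      have : ∃ B ∈ F, Disjoint B S := by
        by_cases h2 : S.card ≤ 2
        · exact hF.2.2 S h2
        · apply not_isCov
          intro hc
          refine hA0.2 S ?_ hSA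
          rw [h𝒯, mem_filter, mem_powersetCard]
          exact ⟨⟨hSA.trans (mem_powersetCard.1 (hF.1 hA0.1)).1, by omega⟩, hc⟩
      obtain ⟨B, hB, hd⟩ := this
      refine ⟨B, (mem_powersetCard.1 (hF.1 hB)).2.le, hd, fun A hA _ => ?_⟩
      exact hF.2.1 A (mem_filter.1 hA).1 B hB) 4 ∅ le_rfl (by simp)
    simpa using this
  refine ⟨𝒯', fun T hT => hm T (mem_filter.1 hT).1, ?_, ?_⟩
  · intro T1 h1 T2 h2
    by_contra hcon
    rw [not_nonempty_iff_eq_empty, ← disjoint_iff_inter_eq_empty] at hcon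
    rw [h𝒯', mem_filter] at h1 h2
    have m1 := hm T1 h1.1
    have m2 := hm T2 h2.1
    have hsub : F.filter (fun A => T1 ⊆ A) ⊆
        T2.biUnion (fun z => F.filter (fun A => insert z T1 ⊆ A)) := by
      intro A hA
      rw [mem_filter] at hA
      obtain ⟨z, hz⟩ := m2.2.2 A hA.1
      rw [mem_inter] at hz
      exact mem_biUnion.2 ⟨z, hz.2, mem_filter.2 ⟨hA.1, insert_subset hz.1 hA.2⟩⟩
    have hle : (F.filter (fun A => T1 ⊆ A)).card ≤ T2.card * c4 := by
      refine (card_le_card hsub).trans (card_biUnion_le_card_mul _ _ _ ?_)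
      intro z hz
      have := card_supersets_le (Icc 1 n) F n k hU hF.1 (insert z T1)
        (insert_subset (m2.2.1 hz) m1.2.1)
      rw [card_insert_of_notMem (fun h => disjoint_left.1 hcon h hz), m1.1] at this
      exact this
    rw [m2.1] at hle
    omega
  · have hsub : F.filter (fun A => ∀ T ∈ 𝒯', ¬ T ⊆ A) ⊆
        F0 ∪ (𝒯.filter (fun T => ¬ 3 * c4 < (F.filter (fun A => T ⊆ A)).card)).biUnion
          (fun T => F.filter (fun A => T ⊆ A)) := by
      intro A hA
      rw [mem_filter] at hA
      by_cases h : ∀ T ∈ 𝒯, ¬ T ⊆ A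
      · exact mem_union_left _ (mem_filter.2 ⟨hA.1, h⟩)
      · push Not at h
        obtain ⟨T, hT, hTA⟩ := h
        apply mem_union_right
        refine mem_biUnion.2 ⟨T, mem_filter.2 ⟨hT, fun hlt => ?_⟩, mem_filter.2 ⟨hA.1, hTA⟩⟩
        exact hA.2 T (mem_filter.2 ⟨hT, hlt⟩) hTA
    have h1 := card_le_card hsub
    have h2 := card_union_le F0 ((𝒯.filter (fun T => ¬ 3 * c4 < (F.filter (fun A => T ⊆ A)).card)).biUnion
          (fun T => F.filter (fun A => T ⊆ A)))
    have h3 : ((𝒯.filter (fun T => ¬ 3 * c4 < (F.filter (fun A => T ⊆ A)).card)).biUnion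
          (fun T => F.filter (fun A => T ⊆ A))).card ≤ k ^ 3 * (3 * c4) := by
      refine (card_biUnion_le_card_mul _ _ (3 * c4) ?_).trans ?_
      · intro T hT
        have := (mem_filter.1 hT).2
        omega
      · exact Nat.mul_le_mul_right _ ((card_le_card (filter_subset _ _)).trans hTc)
    calc _ ≤ k ^ 4 * c4 + k ^ 3 * (3 * c4) := by omega
      _ = _ := by ring

lemma c3_c4 (n k : ℕ) (hk : 4 ≤ k) (hn : 10 * k ^ 5 ≤ n) :
    10 * k ^ 4 * (n - 4).choose (k - 4) ≤ (n - 3).choose (k - 3) := by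
  have hkn : 10 * k ≤ n := le_trans (Nat.mul_le_mul_left 10 (Nat.le_self_pow (by omega) k)) hn
  have h := Nat.add_one_mul_choose_eq (n - 4) (k - 4)
  have e1 : n - 4 + 1 = n - 3 := by omega
  have e2 : k - 4 + 1 = k - 3 := by omega
  rw [e1, e2] at h
  have h2 : 10 * k ^ 4 * (k - 3) ≤ n - 3 := by
    obtain ⟨j, rfl⟩ : ∃ j, k = j + 3 := ⟨k - 3, by omega⟩
    have : 10 * (j + 3) ^ 5 = 10 * (j + 3) ^ 4 * j + 30 * (j + 3) ^ 4 := by ring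
    have : 0 < (j + 3) ^ 4 := by positivity
    simp only [Nat.add_sub_cancel]
    omega
  have hp : 0 < k - 3 := by omega
  apply Nat.le_of_mul_le_mul_right _ hp
  rw [← h]
  calc _ = 10 * k ^ 4 * (k - 3) * (n - 4).choose (k - 4) := by ring
    _ ≤ _ := Nat.mul_le_mul_right _ h2

theorem kernel_thm (n k : ℕ) (hk : 4 ≤ k) (hn : 10 * k ^ 5 ≤ n) (F : Finset (Finset ℕ))
    (hF : Good n k F) : F.card ≤ (C3fam n k).card := by
  by_contra hcon
  push Not at hcon
  have hkn : 10 * k ≤ n := le_trans (Nat.mul_le_mul_left 10 (Nat.le_self_pow (by omega) k)) hn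
  obtain ⟨𝒯, hm, hInt, hrest⟩ := rest_bound n k hk F hF
  have hc := c3_c4 n k hk hn
  have hE : (n - 3).choose (k - 3) ≤ (n - 2 * k).choose (k - 3) + (2 * k) * (n - 4).choose (k - 4) := by
    have := choose_drop (n - 4) (k - 4) (2 * k - 3)
    have e1 : n - 4 + 1 = n - 3 := by omega
    have e2 : k - 4 + 1 = k - 3 := by omega
    have e3 : n - 3 - (2 * k - 3) = n - 2 * k := by omega
    rw [e1, e2, e3] at this
    have := Nat.mul_le_mul_right ((n - 4).choose (k - 4)) (show 2 * k - 3 ≤ 2 * k by omega)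
    omega
  set c3 := (n - 3).choose (k - 3) with hc3
  set c4 := (n - 4).choose (k - 4) with hc4
  set E := (n - 2 * k).choose (k - 3) with hEE
  have hc4p : 0 < c4 := Nat.choose_pos (by omega)
  have hk3 : 4 * k ^ 3 ≤ k ^ 4 := by
    calc 4 * k ^ 3 ≤ k * k ^ 3 := Nat.mul_le_mul_right _ hk
      _ = k ^ 4 := by ring
  have hk2 : 16 * k ^ 2 ≤ k ^ 4 := by
    calc 16 * k ^ 2 ≤ (k * k) * k ^ 2 := Nat.mul_le_mul_right _ (by nlinarith)
      _ = k ^ 4 := by ring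
  have hk1 : 4 * k ≤ k ^ 2 := by nlinarith
  have havoid : ∀ x, ∃ T ∈ 𝒯, x ∉ T := by
    intro x
    by_contra hx
    push Not at hx
    have hsub : Gx F x ⊆ F.filter (fun A => ∀ T ∈ 𝒯, ¬ T ⊆ A) := by
      intro A hA
      rw [Gx, mem_filter] at hA
      exact mem_filter.2 ⟨hA.1, fun T hT hTA => hA.2 (hTA (hx T hT))⟩
    have h1 := card_le_card hsub
    have hxn : x ∈ Icc 1 n ∨ 𝒯 = ∅ := by
      rcases 𝒯.eq_empty_or_nonempty with h | ⟨T, hT⟩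
      · exact Or.inr h
      · exact Or.inl ((hm T hT).2.1 (hx T hT))
    have hbig : (k ^ 4 + 3 * k ^ 3) * c4 ≤ E := by
      have : (k ^ 4 + 3 * k ^ 3 + 2 * k) * c4 ≤ 10 * k ^ 4 * c4 :=
        Nat.mul_le_mul_right _ (by omega)
      have e : (k ^ 4 + 3 * k ^ 3 + 2 * k) * c4 = (k ^ 4 + 3 * k ^ 3) * c4 + 2 * k * c4 := by ring
      omega
    have hx' : ∃ y ∈ Icc 1 n, (Gx F y).card ≤ E + 3 := by
      rcases hxn with h | h
      · exact ⟨x, h, by omega⟩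
      · refine ⟨1, by simp; omega, ?_⟩
        have : (Gx F 1).card ≤ (F.filter (fun A => ∀ T ∈ 𝒯, ¬ T ⊆ A)).card := by
          apply card_le_card
          intro A hA
          rw [Gx, mem_filter] at hA
          rw [mem_filter, h]
          simp [hA.1]
        omega
    obtain ⟨y, hy, hy2⟩ := hx'
    have := part2 n k y hk (by omega) F hF hy hy2
    omega
  have hT := triples_bound 𝒯 k hk (fun T hT => (hm T hT).1) hInt havoid (by
    intro S hS
    obtain ⟨B, hB, hd⟩ := hF.2.2 S hS
    refine ⟨B, (mem_powersetCard.1 (hF.1 hB)).2.le, hd, fun T hT => ?_⟩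
    rw [inter_comm]
    exact (hm T hT).2.2 B hB)
  have hFle : F.card ≤ (k ^ 4 + 3 * k ^ 3) * c4 + 3 * k * c3 := by
    have hsub : F ⊆ F.filter (fun A => ∀ T ∈ 𝒯, ¬ T ⊆ A) ∪
        𝒯.biUnion (fun T => F.filter (fun A => T ⊆ A)) := by
      intro A hA
      by_cases h : ∀ T ∈ 𝒯, ¬ T ⊆ A
      · exact mem_union_left _ (mem_filter.2 ⟨hA, h⟩)
      · push Not at h
        obtain ⟨T, hT, hTA⟩ := h
        exact mem_union_right _ (mem_biUnion.2 ⟨T, hT, mem_filter.2 ⟨hA, hTA⟩⟩)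
    have h1 := card_le_card hsub
    have h2 := card_union_le (F.filter (fun A => ∀ T ∈ 𝒯, ¬ T ⊆ A))
        (𝒯.biUnion (fun T => F.filter (fun A => T ⊆ A)))
    have h3 : (𝒯.biUnion (fun T => F.filter (fun A => T ⊆ A))).card ≤ 𝒯.card * c3 := by
      apply card_biUnion_le_card_mul
      intro T hT
      have := card_supersets_le (Icc 1 n) F n k (by simp) hF.1 T (hm T hT).2.1
      rw [(hm T hT).1] at this
      exact this
    have h4 := Nat.mul_le_mul_right c3 hT
    omega
  have hD := D_lb1 n k (by omega) (by omega)
  rw [← hEE] at hD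
  obtain ⟨i, rfl⟩ : ∃ i, k = i + 4 := ⟨k - 4, by omega⟩
  have e1 : i + 4 - 1 = i + 3 := by omega
  rw [e1] at hD
  have g1 : (3 * (i + 4) + 1) * E ≤ ((i + 4) * (i + 3) + 1) * E :=
    Nat.mul_le_mul_right _ (by nlinarith)
  have g2 : (3 * (i + 4) + 1) * c3 ≤ (3 * (i + 4) + 1) * E + (3 * (i + 4) + 1) * (2 * (i + 4) * c4) := by
    rw [← mul_add]; exact Nat.mul_le_mul_left _ hE
  have g3 : (3 * (i + 4) + 1) * (2 * (i + 4) * c4) + ((i + 4) ^ 4 + 3 * (i + 4) ^ 3) * c4 ≤ c3 := by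
    refine le_trans ?_ hc
    have : (3 * (i + 4) + 1) * (2 * (i + 4) * c4) + ((i + 4) ^ 4 + 3 * (i + 4) ^ 3) * c4 =
      (6 * (i + 4) ^ 2 + 2 * (i + 4) + (i + 4) ^ 4 + 3 * (i + 4) ^ 3) * c4 := by ring
    rw [this]
    apply Nat.mul_le_mul_right
    omega
  have g4 : (3 * (i + 4) + 1) * c3 = 3 * (i + 4) * c3 + c3 := by ring
  omega

lemma Good_shift (n k : ℕ) (hk : 1 ≤ k) (F : Finset (Finset ℕ)) (hF : Good n k F) :
    ∃ F', Good n k F' ∧ F'.card = F.card ∧ ∃ x ∈ Icc 1 n, F'.card ≤ 3 * (Fx F' x).card :=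
  shift_main n k hk _ F rfl hF

/-- the regime `n ≥ 100 k^2`, `k ≥ 100` -/
theorem mid_thm (n k : ℕ) (hk : 100 ≤ k) (hn : 100 * (k * k) ≤ n) (F : Finset (Finset ℕ))
    (hF : Good n k F) : F.card ≤ (C3fam n k).card := by
  by_contra hcon
  push Not at hcon
  obtain ⟨F', hF', hcard, x, hx, hx3⟩ := Good_shift n k (by omega) F hF
  have hkk : 100 * k ≤ k * k := Nat.mul_le_mul_right _ hk
  have hG : (n - 2 * k).choose (k - 3) + 3 < (Gx F' x).card := by
    by_contra h
    have := part2 n k x (by omega) (by omega) F' hF' hx (by omega)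
    omega
  have hc : 99 * k * (n - 4).choose (k - 4) ≤ (n - 3).choose (k - 3) := by
    have h := Nat.add_one_mul_choose_eq (n - 4) (k - 4)
    have e1 : n - 4 + 1 = n - 3 := by omega
    have e2 : k - 4 + 1 = k - 3 := by omega
    rw [e1, e2] at h
    have h2 : 99 * k * (k - 3) ≤ n - 3 := by
      have : 99 * k * (k - 3) ≤ 99 * k * k := Nat.mul_le_mul_left _ (by omega)
      have e : 99 * k * k = 99 * (k * k) := by ring
      omega
    have hp : 0 < k - 3 := by omega
    apply Nat.le_of_mul_le_mul_right _ hp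
    rw [← h]
    calc _ = 99 * k * (k - 3) * (n - 4).choose (k - 4) := by ring
      _ ≤ _ := Nat.mul_le_mul_right _ h2
  have hE : (n - 3).choose (k - 3) ≤ (n - 2 * k).choose (k - 3) + (2 * k) * (n - 4).choose (k - 4) := by
    have := choose_drop (n - 4) (k - 4) (2 * k - 3)
    have e1 : n - 4 + 1 = n - 3 := by omega
    have e2 : k - 4 + 1 = k - 3 := by omega
    have e3 : n - 3 - (2 * k - 3) = n - 2 * k := by omega
    rw [e1, e2, e3] at this
    have := Nat.mul_le_mul_right ((n - 4).choose (k - 4)) (show 2 * k - 3 ≤ 2 * k by omega)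
    omega
  have hD := D_lb1 n k (by omega) (by omega)
  have hP := lemmaP (Icc 1 n) F' n k x (by simp) hF'.1 hx (by omega) hF'.2.2 hF'.2.1
  set c3 := (n - 3).choose (k - 3) with hc3
  set c4 := (n - 4).choose (k - 4) with hc4
  set E := (n - 2 * k).choose (k - 3) with hEE
  have h16 : 16 * c4 ≤ E := by
    have : 97 * k * c4 + 2 * k * c4 ≤ c3 := by
      calc _ = 99 * k * c4 := by ring
        _ ≤ _ := hc
    have : 16 * c4 ≤ 97 * k * c4 := Nat.mul_le_mul_right _ (by omega)
    omega
  have hP := hP (by omega)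
  have hb : 97 * c3 ≤ 99 * E := by
    have e : 99 * (2 * k * c4) = 2 * (99 * k * c4) := by ring
    omega
  have hk3 : 99 * (k ^ 3 * c4) ≤ k * k * c3 := by
    calc 99 * (k ^ 3 * c4) = k * k * (99 * k * c4) := by ring
      _ ≤ _ := Nat.mul_le_mul_left _ hc
  have hlow : (k * (k - 1) + 1) * (97 * c3) ≤ 99 * ((k * (k - 1) + 1) * E) := by
    calc _ ≤ (k * (k - 1) + 1) * (99 * E) := Nat.mul_le_mul_left _ hb
      _ = _ := by ring
  have hfin : 891 * k * c3 + 3 * (k * k * c3) ≤ (k * (k - 1) + 1) * (97 * c3) := by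
    have : 891 * k + 3 * (k * k) ≤ (k * (k - 1) + 1) * 97 := by
      obtain ⟨i, rfl⟩ : ∃ i, k = i + 1 := ⟨k - 1, by omega⟩
      rw [Nat.add_sub_cancel]
      nlinarith
    calc _ = (891 * k + 3 * (k * k)) * c3 := by ring
      _ ≤ (k * (k - 1) + 1) * 97 * c3 := Nat.mul_le_mul_right _ this
      _ = _ := by ring
  have e : 891 * k * c3 = 297 * (3 * k * c3) := by ring
  omega

lemma half_drop (a r t : ℕ) (h : 2 * t * r ≤ a) : a.choose r ≤ 2 * (a - t).choose r := by
  rcases r with _ | r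
  · simp
  rcases a with _ | a
  · simp
  have h1 := choose_drop a r t
  have h2 := Nat.add_one_mul_choose_eq a r
  have h3 : 2 * t * a.choose r ≤ (a + 1).choose (r + 1) := by
    apply Nat.le_of_mul_le_mul_right _ (Nat.succ_pos r)
    rw [Nat.succ_eq_add_one, ← h2]
    calc _ = 2 * t * (r + 1) * a.choose r := by ring
      _ ≤ _ := Nat.mul_le_mul_right _ h
  have e : 2 * t * a.choose r = 2 * (t * a.choose r) := by ring
  omega

lemma drops (a r t : ℕ) : ∀ i, 2 * t * r ≤ a - i * t → a.choose r ≤ 2 ^ i * (a - i * t).choose r := by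
  intro i
  induction i with
  | zero => simp
  | succ i ih =>
    intro h
    have e : a - (i + 1) * t = a - i * t - t := by rw [Nat.succ_mul]; omega
    rw [e] at h ⊢
    have h1 := ih (by omega)
    have h2 := half_drop (a - i * t) r t (by omega)
    calc a.choose r ≤ 2 ^ i * (a - i * t).choose r := h1
      _ ≤ 2 ^ i * (2 * (a - i * t - t).choose r) := Nat.mul_le_mul_left _ h2
      _ = _ := by ring

lemma up_step (a r K : ℕ) (h : K * (r + 1) ≤ a - r) : K * a.choose r ≤ a.choose (r + 1) := by
  apply Nat.le_of_mul_le_mul_right _ (Nat.succ_pos r)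
  rw [Nat.succ_eq_add_one, Nat.choose_succ_right_eq]
  calc _ = a.choose r * (K * (r + 1)) := by ring
    _ ≤ _ := Nat.mul_le_mul_left _ h

lemma ups (a r K : ℕ) : ∀ i, K * (r + i) ≤ a - (r + i) → K ^ i * a.choose r ≤ a.choose (r + i) := by
  intro i
  induction i with
  | zero => simp
  | succ i ih =>
    intro h
    have h0 : K * (r + i) ≤ K * (r + (i + 1)) := Nat.mul_le_mul_left _ (by omega)
    have h1 := ih (by omega)
    have h2 := up_step a (r + i) K (by rw [add_assoc]; omega)
    calc K ^ (i + 1) * a.choose r = K * (K ^ i * a.choose r) := by ring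
      _ ≤ K * a.choose (r + i) := Nat.mul_le_mul_left _ h1
      _ ≤ _ := h2

lemma D_seven (n k : ℕ) (hk : 1000 ≤ k) (hn : 10 ^ 9 * k ≤ n) (hn2 : n < 100 * (k * k)) :
    7 * (n - 2).choose (k - 2) + 3 ≤ (C3fam n k).card := by
  set u := n / (200 * k) with hu
  have hu1 : u * (200 * k) ≤ n := Nat.div_mul_le_self _ _
  have hu2 : n < (u + 1) * (200 * k) := by
    have := Nat.lt_div_mul_add (a := n) (b := 200 * k) (by omega)
    rw [← hu] at this
    calc n < u * (200 * k) + 200 * k := this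
      _ = _ := by ring
  have hu3 : 100000 ≤ u := by
    rw [hu, Nat.le_div_iff_mul_le (by omega)]
    omega
  have huk : u ≤ k - 1 := by
    by_contra h
    have h1 : k ≤ u := by omega
    have : k * (200 * k) ≤ u * (200 * k) := Nat.mul_le_mul_right _ h1
    have e : k * (200 * k) = 200 * (k * k) := by ring
    omega
  have hD := D_lb2 n k u (by omega) (by omega) huk
  have hh : (n - 3).choose (k - 3) ≤ 2 * (n - 1 - 2 * u).choose (k - 3) := by
    have := half_drop (n - 3) (k - 3) (2 * u - 2) (by
      have h1 : 2 * (2 * u - 2) * (k - 3) ≤ (4 * u) * k := Nat.mul_le_mul (by omega) (by omega)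
      have e : u * (200 * k) = 50 * (4 * u * k) := by ring
      omega)
    have e : n - 3 - (2 * u - 2) = n - 1 - 2 * u := by omega
    rwa [e] at this
  have hs := Nat.add_one_mul_choose_eq (n - 3) (k - 3)
  have e1 : n - 3 + 1 = n - 2 := by omega
  have e2 : k - 3 + 1 = k - 2 := by omega
  rw [e1, e2] at hs
  have key : 14 * (n - 2) ≤ u * u * (k - 2) := by
    have h1 : n ≤ u * (400 * k) := by
      have : (u + 1) * (200 * k) ≤ (2 * u) * (200 * k) := Nat.mul_le_mul_right _ (by omega)
      have e : (2 * u) * (200 * k) = u * (400 * k) := by ring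
      omega
    have h2 : 100000 * n ≤ u * (u * (400 * k)) := Nat.mul_le_mul hu3 h1
    have h3 : u * u * k ≤ u * u * (2 * (k - 2)) := Nat.mul_le_mul_left _ (by omega)
    have e3 : u * (u * (400 * k)) = 400 * (u * u * k) := by ring
    have e4 : u * u * (2 * (k - 2)) = 2 * (u * u * (k - 2)) := by ring
    omega
  have hfin : 14 * (n - 2).choose (k - 2) ≤ u * u * (n - 3).choose (k - 3) := by
    have hp : 0 < k - 2 := by omega
    apply Nat.le_of_mul_le_mul_right _ hp
    calc 14 * (n - 2).choose (k - 2) * (k - 2) = 14 * ((n - 2).choose (k - 2) * (k - 2)) := by ring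
      _ = 14 * ((n - 2) * (n - 3).choose (k - 3)) := by rw [hs]
      _ = 14 * (n - 2) * (n - 3).choose (k - 3) := by ring
      _ ≤ u * u * (k - 2) * (n - 3).choose (k - 3) := Nat.mul_le_mul_right _ key
      _ = _ := by ring
  have h2 : u * u * (n - 3).choose (k - 3) ≤ u * u * (2 * (n - 1 - 2 * u).choose (k - 3)) :=
    Nat.mul_le_mul_left _ hh
  have e5 : u * u * (2 * (n - 1 - 2 * u).choose (k - 3)) =
    2 * (u * u * (n - 1 - 2 * u).choose (k - 3)) := by ring
  omega

lemma choose_rise (a r : ℕ) : ∀ t, a.choose (r + 1) + t * a.choose r ≤ (a + t).choose (r + 1) := by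
  intro t
  induction t with
  | zero => simp
  | succ t ih =>
    have h : (a + (t + 1)).choose (r + 1) = (a + t).choose r + (a + t).choose (r + 1) :=
      Nat.choose_succ_succ (a + t) r
    have h2 : a.choose r ≤ (a + t).choose r := Nat.choose_le_choose r (by omega)
    rw [h, Nat.succ_mul]
    omega

lemma numE_i (n k : ℕ) (hk : 1000 ≤ k) (hn : 2 ^ 101 * k < n) (h : k * k ≤ 10 * n) :
    (n - 5).choose (k - 4) ≤ (n - 2 * k).choose (k - 3) := by
  set t := n / (4 * k) with ht
  have ht1 : t * (4 * k) ≤ n := Nat.div_mul_le_self _ _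
  have ht2 : n < (t + 1) * (4 * k) := by
    have := Nat.lt_div_mul_add (a := n) (b := 4 * k) (by omega)
    rw [← ht] at this
    calc n < t * (4 * k) + 4 * k := this
      _ = _ := by ring
  have htk : k ≤ 40 * (t + 1) := by
    by_contra hc
    have h1 : 40 * (t + 1) * k < k * k := Nat.mul_lt_mul_of_pos_right (by omega) (by omega)
    have e : 40 * (t + 1) * k = 10 * ((t + 1) * (4 * k)) := by ring
    omega
  have h100 : 400 * t ≤ n := by
    have : t * 400 ≤ t * (4 * k) := Nat.mul_le_mul_left _ (by omega)
    omega
  have hd := drops (n - 4) (k - 3) t 100 (by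
    have h1 : 2 * t * (k - 3) ≤ 2 * t * k := Nat.mul_le_mul_left _ (by omega)
    have e : t * (4 * k) = 2 * (2 * t * k) := by ring
    omega)
  have hm : (n - 4 - 100 * t).choose (k - 3) ≤ (n - 2 * k).choose (k - 3) :=
    Nat.choose_le_choose _ (by omega)
  have hs := Nat.add_one_mul_choose_eq (n - 5) (k - 4)
  have e1 : n - 5 + 1 = n - 4 := by omega
  have e2 : k - 4 + 1 = k - 3 := by omega
  rw [e1, e2] at hs
  have hr : 2 ^ 100 * (n - 5).choose (k - 4) ≤ (n - 4).choose (k - 3) := by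
    have hp : 0 < k - 3 := by omega
    apply Nat.le_of_mul_le_mul_right _ hp
    rw [← hs]
    calc _ = 2 ^ 100 * (k - 3) * (n - 5).choose (k - 4) := by ring
      _ ≤ _ := Nat.mul_le_mul_right _ (by omega)
  omega

lemma numE_ii (n k : ℕ) (hk : 1000 ≤ k) (hn : 2 ^ 101 * k < n) :
    (n - 1 - k / 10).choose (k - k / 10) ≤ (n - 2 * k).choose (k - 3) := by
  set s := k / 10 with hs
  have hd := drops (n - 1 - s) (k - s) 1 (2 * k) (by omega)
  have hm : (n - 1 - s - 2 * k * 1).choose (k - s) ≤ (n - 2 * k).choose (k - s) :=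
    Nat.choose_le_choose _ (by omega)
  have hu := ups (n - 2 * k) (k - s) (2 ^ 30) (s - 3) (by omega)
  have e : k - s + (s - 3) = k - 3 := by omega
  rw [e, ← pow_mul] at hu
  have hp : 2 ^ (2 * k) ≤ 2 ^ (30 * (s - 3)) := Nat.pow_le_pow_right (by omega) (by omega)
  calc _ ≤ _ := hd
    _ ≤ 2 ^ (30 * (s - 3)) * (n - 2 * k).choose (k - s) := Nat.mul_le_mul hp hm
    _ ≤ _ := hu

lemma ratio_six (n k : ℕ) (hk : 1000 ≤ k) (hn : 2 ^ 101 * k < n) (h : 10 * n < k * k) :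
    6 * (n - k - 1).choose (k - 1) ≤ (n - 1 - k / 10).choose (k - 1) := by
  set s := k / 10 with hs
  have h1 := choose_rise (n - k - 1) (k - 2) (k - s)
  have e1 : k - 2 + 1 = k - 1 := by omega
  have e2 : n - k - 1 + (k - s) = n - 1 - s := by omega
  rw [e1, e2] at h1
  have h2 := Nat.choose_succ_right_eq (n - k - 1) (k - 2)
  rw [e1] at h2
  have h3 : 5 * (n - k - 1).choose (k - 1) ≤ (k - s) * (n - k - 1).choose (k - 2) := by
    have hp : 0 < k - 1 := by omega
    apply Nat.le_of_mul_le_mul_right _ hp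
    have hk2 : 5 * (n - k - 1 - (k - 2)) ≤ (k - s) * (k - 1) := by
      have : (k - s) * (2 * (k - 1)) ≥ (k - s) * k := Nat.mul_le_mul_left _ (by omega)
      have e : (k - s) * (2 * (k - 1)) = 2 * ((k - s) * (k - 1)) := by ring
      have : k * k ≤ (2 * (k - s)) * k := Nat.mul_le_mul_right _ (by omega)
      have e' : (2 * (k - s)) * k = 2 * ((k - s) * k) := by ring
      have : (k - s) * (4 * (k - 1)) ≥ (k - s) * (2 * k + k) := Nat.mul_le_mul_left _ (by omega)
      have e3 : (k - s) * (4 * (k - 1)) = 4 * ((k - s) * (k - 1)) := by ring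
      have e4 : (k - s) * (2 * k + k) = 3 * ((k - s) * k) := by ring
      have : 9 * k * k ≤ (10 * (k - s)) * k := Nat.mul_le_mul_right _ (by omega)
      have e5 : (10 * (k - s)) * k = 10 * ((k - s) * k) := by ring
      have e6 : 9 * k * k = 9 * (k * k) := by ring
      omega
    calc _ = 5 * ((n - k - 1).choose (k - 1) * (k - 1)) := by ring
      _ = 5 * (n - k - 1 - (k - 2)) * (n - k - 1).choose (k - 2) := by rw [h2]; ring
      _ ≤ (k - s) * (k - 1) * (n - k - 1).choose (k - 2) := Nat.mul_le_mul_right _ hk2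
      _ = _ := by ring
  omega

theorem small_thm (n k : ℕ) (hn : 2 ^ 101 * k < n) (hn2 : n < 100 * (k * k)) (F : Finset (Finset ℕ))
    (hF : Good n k F) : F.card ≤ (C3fam n k).card := by
  have hk : 1000 ≤ k := by
    by_contra h
    have : k * k ≤ 1000 * k := Nat.mul_le_mul_right _ (by omega)
    omega
  by_contra hcon
  push Not at hcon
  obtain ⟨F', hF', hcard, x, hx, hx3⟩ := Good_shift n k (by omega) F hF
  have hG : (n - 2 * k).choose (k - 3) + 3 < (Gx F' x).card := by
    by_contra h
    have := part2 n k x (by omega) (by omega) F' hF' hx (by omega)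
    omega
  have h7 := D_seven n k hk (by omega) hn2
  have hadd := Fx_add_Gx F' x
  have hstar := star_bound n k x (by omega) F' hF' hx
  have hVc : ((Icc 1 n).erase x).card = n - 1 := by rw [card_erase_of_mem hx]; simp
  have hkk := fun s (hs : s ≤ k) => kk_miss ((Icc 1 n).erase x) (Gx F' x) (n - 1) k s hVc
    (Gx_sub n k x F' hF') (Gx_card n k x F' hF') hs (by omega) (by omega)
  have p1 : (n - 1).choose (k - 1) = (n - 2).choose (k - 2) + (n - 2).choose (k - 1) := by
    have := Nat.choose_succ_succ (n - 2) (k - 2)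
    rwa [show (n - 2).succ = n - 1 by omega, show (k - 2).succ = k - 1 by omega] at this
  have p2 : (n - 2).choose (k - 1) = (n - 3).choose (k - 2) + (n - 3).choose (k - 1) := by
    have := Nat.choose_succ_succ (n - 3) (k - 2)
    rwa [show (n - 3).succ = n - 2 by omega, show (k - 2).succ = k - 1 by omega] at this
  have p3 : (n - 3).choose (k - 1) = (n - 4).choose (k - 2) + (n - 4).choose (k - 1) := by
    have := Nat.choose_succ_succ (n - 4) (k - 2)
    rwa [show (n - 4).succ = n - 3 by omega, show (k - 2).succ = k - 1 by omega] at this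
  have p4 : (n - 4).choose (k - 1) = (n - 5).choose (k - 2) + (n - 5).choose (k - 1) := by
    have := Nat.choose_succ_succ (n - 5) (k - 2)
    rwa [show (n - 5).succ = n - 4 by omega, show (k - 2).succ = k - 1 by omega] at this
  have m3 : (n - 3).choose (k - 2) ≤ (n - 2).choose (k - 2) := Nat.choose_le_choose _ (by omega)
  have m4 : (n - 4).choose (k - 2) ≤ (n - 2).choose (k - 2) := Nat.choose_le_choose _ (by omega)
  have m5 : (n - 5).choose (k - 2) ≤ (n - 2).choose (k - 2) := Nat.choose_le_choose _ (by omega)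
  have hA : (Gx F' x).card < (n - 3).choose (k - 2) := by
    by_contra h
    have := hkk 2 (by omega) (by rw [show n - 1 - 2 = n - 3 by omega]; omega)
    rw [show n - 1 - 2 = n - 3 by omega] at this
    omega
  rcases le_or_gt (k * k) (10 * n) with hc | hc
  · have hE := numE_i n k hk hn hc
    have := hkk 4 (by omega) (by rw [show n - 1 - 4 = n - 5 by omega]; omega)
    rw [show n - 1 - 4 = n - 5 by omega] at this
    omega
  · have hE := numE_ii n k hk hn
    have hR := ratio_six n k hk hn hc
    have hex : ∃ s, (n - 1 - s).choose (k - s) ≤ (Gx F' x).card := ⟨k / 10, by omega⟩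
    classical
    obtain ⟨s, hs, hmin⟩ : ∃ s, (n - 1 - s).choose (k - s) ≤ (Gx F' x).card ∧
        ∀ r < s, (Gx F' x).card < (n - 1 - r).choose (k - r) :=
      ⟨Nat.find hex, Nat.find_spec hex, fun r hr => by
        have := Nat.find_min hex hr
        omega⟩
    have hs0 : s ≤ k / 10 := by
      by_contra h
      have := hmin (k / 10) (by omega)
      omega
    have hs3 : 3 ≤ s := by
      by_contra h
      have hmono : (n - 3).choose (k - 2) ≤ (n - 1 - s).choose (k - s) := by
        have h1 := Nat.choose_succ_succ (n - 3) (k - 2)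
        have h2 := Nat.choose_succ_succ (n - 2) (k - 1)
        rw [show (n - 3).succ = n - 2 by omega, show (k - 2).succ = k - 1 by omega] at h1
        rw [show (n - 2).succ = n - 1 by omega, show (k - 1).succ = k by omega] at h2
        interval_cases s
        · simp only [Nat.sub_zero]
          omega
        · rw [show n - 1 - 1 = n - 2 by omega]
          omega
        · rw [show n - 1 - 2 = n - 3 by omega]
      omega
    have hL := hkk s (by omega) hs
    have hub := hmin (s - 1) (by omega)
    -- bound on the size of the link complement
    have b1 : (n - 1 - (s - 1)).choose (k - (s - 1)) ≤ (n - 1 - (s - 1)).choose (k - 2) := by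
      have := ups (n - 1 - (s - 1)) (k - (s - 1)) 1 (s - 3) (by omega)
      rwa [one_pow, one_mul, show k - (s - 1) + (s - 3) = k - 2 by omega] at this
    have b2 := half_drop (n - 1 - (s - 1)) (k - 2) 1 (by omega)
    rw [show n - 1 - (s - 1) - 1 = n - 1 - s by omega] at b2
    have b3 := up_step (n - 1 - s) (k - 2) 4 (by omega)
    rw [show k - 2 + 1 = k - 1 by omega] at b3
    have b4 : (n - 1 - k / 10).choose (k - 1) ≤ (n - 1 - s).choose (k - 1) :=
      Nat.choose_le_choose _ (by omega)
    have hD := D_lb3 (n - 2 * k) (k - 3)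
    rw [show n - 2 * k + 2 * (k - 3) + 6 = n by omega, show n - 2 * k + 2 * (k - 3) + 5 = n - 1 by omega,
      show k - 3 + 2 = k - 1 by omega, show k - 3 + 3 = k by omega, show k - 3 + 1 = k - 2 by omega,
      show n - 2 * k + (k - 3) + 2 = n - k - 1 by omega,
      show n - 2 * k + (k - 3) + 1 = n - k - 2 by omega] at hD
    have b5 : (n - k - 2).choose (k - 2) ≤ (n - k - 1).choose (k - 1) := by
      have := Nat.choose_succ_succ (n - k - 2) (k - 2)
      rw [show (n - k - 2).succ = n - k - 1 by omega, show (k - 2).succ = k - 1 by omega] at this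
      omega
    omega

theorem upper_thm (n k : ℕ) (hk : 3 ≤ k) (hn : 2 ^ 101 * k < n) (F : Finset (Finset ℕ))
    (hF : Good n k F) : F.card ≤ (C3fam n k).card := by
  rcases Nat.lt_or_ge k 4 with h4 | h4
  · obtain rfl : k = 3 := by omega
    have h1 := k3_thm F (fun A hA => (mem_powersetCard.mp (hF.1 hA)).2) hF.2.1 hF.2.2
    have h2 := D_lb1 n 3 (by omega) (by omega)
    simp only [Nat.sub_self, Nat.choose_zero_right] at h2
    omega
  rcases Nat.lt_or_ge k 100 with h | h
  · refine kernel_thm n k h4 ?_ F hF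
    have : k ^ 4 ≤ 100 ^ 4 := Nat.pow_le_pow_left (by omega) 4
    have h2 : k ^ 4 * k ≤ 100 ^ 4 * k := Nat.mul_le_mul_right _ this
    have e : k ^ 5 = k ^ 4 * k := by ring
    omega
  rcases Nat.lt_or_ge n (100 * (k * k)) with h2 | h2
  · exact small_thm n k hn h2 F hF
  · exact mid_thm n k h h2 F hF

/-- For `k ≥ 3` and `n > Ck` (absolute constant `C`), the maximum size of an intersecting
family `F ⊆ C([n],k)` with covering number `τ(F) ≥ 3` is `|C_3(n,k)|`: every such `F`
satisfies `|F| ≤ |C_3(n,k)|`, and `C_3(n,k)` itself is such a family. -/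
theorem cover_three_maximum :
    ∃ C : ℕ, ∀ n k : ℕ, 3 ≤ k → C * k < n →
      ((∀ F : Finset (Finset ℕ), F ⊆ (Finset.Icc 1 n).powersetCard k →
          (∀ A ∈ F, ∀ B ∈ F, (A ∩ B).Nonempty) →
          (¬ ∃ S : Finset ℕ, S.card ≤ 2 ∧ covers S F) →
          F.card ≤ (C3fam n k).card) ∧
        C3fam n k ⊆ (Finset.Icc 1 n).powersetCard k ∧
        (∀ A ∈ C3fam n k, ∀ B ∈ C3fam n k, (A ∩ B).Nonempty) ∧
        (¬ ∃ S : Finset ℕ, S.card ≤ 2 ∧ covers S (C3fam n k))) := by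
  refine ⟨2 ^ 101, fun n k hk hn => ⟨?_, C3_sub n k hk (by omega), C3_int n k hk,
    C3_tau n k hk (by omega)⟩⟩
  intro F hF hInt ht
  refine upper_thm n k hk hn F ⟨hF, hInt, ?_⟩
  intro S hS
  by_contra hcon
  push Not at hcon
  refine ht ⟨S, hS, fun A hA => ?_⟩
  have := hcon A hA
  rw [Finset.not_disjoint_iff_nonempty_inter] at this
  rwa [Finset.inter_comm]
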